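/- Let X be a rearrangement invariant space on [0,1] which has the weak Banach-Saks property and is such that both X and X* have the subsequence splitting property. Let K : [0,1]×[0,1] → [0,∞] be a measurable kernel such that T_K(χ_{[0,1]}) ∈ X. Then the Banach function space [T_K,X] := {f ∈ L⁰[0,1] : T_K(|f|) ∈ X}, with norm ‖f‖_{[T_K,X]} := ‖T_K(|f|)‖_X, has both the subsequence splitting property and the weak Banach-Saks property. -/

import Mathlib

open MeasureTheory Filter Topology
open scoped ENNReal

noncomputable section

namespace Paper

variable {Ω : Type*} [MeasurableSpace Ω]
variable {X : Type*} [NormedAddCommGroup X] [NormedSpace ℝ X]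

/-- The signed measure `x* ∘ m` for a functional `x*` and vector measure `m`. -/
def dualApply (m : VectorMeasure Ω X) (x : X →L[ℝ] ℝ) : SignedMeasure Ω :=
  m.mapRange x.toLinearMap.toAddMonoidHom x.continuous

/-- The semivariation `‖m‖(A)` of a vector measure. -/
def semivar (m : VectorMeasure Ω X) (A : Set Ω) : ℝ≥0∞ :=
  ⨆ x : {x : X →L[ℝ] ℝ // ‖x‖ ≤ 1}, (dualApply m x.1).totalVariation A

/-- `P` holds `‖m‖`-almost everywhere. -/
def MAE (m : VectorMeasure Ω X) (P : Ω → Prop) : Prop :=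
  ∃ N : Set Ω, MeasurableSet N ∧ semivar m N = 0 ∧ ∀ ω ∉ N, P ω

/-- The integral `∫_A f ds` of a real function with respect to a signed measure. -/
def sIntegral (s : SignedMeasure Ω) (f : Ω → ℝ) (A : Set Ω) : ℝ :=
  (∫ ω in A, f ω ∂s.toJordanDecomposition.posPart) -
    ∫ ω in A, f ω ∂s.toJordanDecomposition.negPart

/-- `f` is integrable with respect to the vector measure `m` (Bartle-Dunford-Schwartz). -/
def MIntegrable (m : VectorMeasure Ω X) (f : Ω → ℝ) : Prop :=
  Measurable f ∧
  (∀ x : X →L[ℝ] ℝ, Integrable f ((dualApply m x).totalVariation)) ∧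
  (∀ A : Set Ω, MeasurableSet A →
    ∃ v : X, ∀ x : X →L[ℝ] ℝ, x v = sIntegral (dualApply m x) f A)

open Classical in
/-- The vector integral `∫_A f dm ∈ X`. -/
def mIntegral (m : VectorMeasure Ω X) (f : Ω → ℝ) (A : Set Ω) : X :=
  if h : ∃ v : X, ∀ x : X →L[ℝ] ℝ, x v = sIntegral (dualApply m x) f A then h.choose
  else 0

/-- The norm of `L¹(m)`: `‖f‖ = sup_{‖x*‖ ≤ 1} ∫ |f| d|x*m|`. -/
def mNorm (m : VectorMeasure Ω X) (f : Ω → ℝ) : ℝ :=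
  ⨆ x : {x : X →L[ℝ] ℝ // ‖x‖ ≤ 1}, ∫ ω, |f ω| ∂(dualApply m x.1).totalVariation

/-- The vector measure `m` is separable: the pseudometric space `(Σ, d_m)`,
`d_m(A,B) = ‖m‖(A △ B)`, is separable. -/
def SeparableVM (m : VectorMeasure Ω X) : Prop :=
  ∃ D : Set (Set Ω), D.Countable ∧ (∀ B ∈ D, MeasurableSet B) ∧
    ∀ A : Set Ω, MeasurableSet A → ∀ ε : ℝ, 0 < ε →
      ∃ B ∈ D, semivar m (symmDiff A B) < ENNReal.ofReal ε

section FunctionSpace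

variable {S : Type*} [MeasurableSpace S]

/-- `T` is a bounded linear functional on the function space determined by the
membership predicate `mem` and the norm `nrm`. -/
def IsBddLinFunctional (mem : (S → ℝ) → Prop) (nrm : (S → ℝ) → ℝ)
    (T : (S → ℝ) → ℝ) : Prop :=
  (∀ f g, mem f → mem g → T (f + g) = T f + T g) ∧
  (∀ (c : ℝ) (f), mem f → T (c • f) = c * T f) ∧
  (∃ C : ℝ, ∀ f, mem f → |T f| ≤ C * nrm f)

/-- `f` is a weakly null sequence in the function space `(mem, nrm)`. -/
def WeaklyNullSeq (mem : (S → ℝ) → Prop) (nrm : (S → ℝ) → ℝ) (f : ℕ → S → ℝ) : Prop :=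
  ∀ T : (S → ℝ) → ℝ, IsBddLinFunctional mem nrm T →
    Tendsto (fun n => T (f n)) atTop (nhds 0)

/-- The set `K` has uniformly absolutely continuous norm in the function space with
norm `nrm` over the measure `μ`. -/
def UnifACNorm (μ : Measure S) (nrm : (S → ℝ) → ℝ) (K : Set (S → ℝ)) : Prop :=
  ∀ ε : ℝ, 0 < ε → ∃ δ : ℝ, 0 < δ ∧ ∀ A : Set S, MeasurableSet A →
    μ A < ENNReal.ofReal δ → ∀ f ∈ K, nrm (A.indicator f) ≤ ε

/-- The subsequence splitting property for the function space `(mem, nrm)` over `μ`. -/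
def HasSSP (μ : Measure S) (mem : (S → ℝ) → Prop) (nrm : (S → ℝ) → ℝ) : Prop :=
  ∀ f : ℕ → S → ℝ, (∀ n, mem (f n)) → (∃ C : ℝ, ∀ n, nrm (f n) ≤ C) →
    ∃ σ : ℕ → ℕ, StrictMono σ ∧
      ∃ g h : ℕ → S → ℝ,
        (∀ n, mem (g n)) ∧ (∀ n, mem (h n)) ∧
        (∀ n, f (σ n) = g n + h n) ∧
        (∀ n, (fun s => g n s * h n s) =ᵐ[μ] 0) ∧
        UnifACNorm μ nrm (Set.range g) ∧
        (∀ i j, i ≠ j → (fun s => h i s * h j s) =ᵐ[μ] 0)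

/-- The weak Banach-Saks property for the function space `(mem, nrm)`. -/
def HasWBS (mem : (S → ℝ) → Prop) (nrm : (S → ℝ) → ℝ) : Prop :=
  ∀ f : ℕ → S → ℝ, (∀ n, mem (f n)) → WeaklyNullSeq mem nrm f →
    ∃ σ : ℕ → ℕ, StrictMono σ ∧
      Tendsto (fun n : ℕ => nrm ((n : ℝ)⁻¹ • ∑ k ∈ Finset.range n, f (σ k))) atTop (nhds 0)

end FunctionSpace

/-- A Banach function space over `(S, μ)`: an (abstract) normed space `X` together with
a linear embedding `J` into measurable functions on `S`, separating points modulo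
`μ`-null sets and satisfying the ideal property. -/
structure BFS (S : Type*) [MeasurableSpace S] (μ : Measure S)
    (X : Type*) [NormedAddCommGroup X] [NormedSpace ℝ X] where
  J : X →ₗ[ℝ] (S → ℝ)
  aemeasurable : ∀ x : X, AEMeasurable (J x) μ
  eq_zero : ∀ x : X, J x =ᵐ[μ] 0 → x = 0
  ideal : ∀ (x : X) (g : S → ℝ), AEMeasurable g μ →
    (∀ᵐ s ∂μ, |g s| ≤ |J x s|) → ∃ y : X, J y =ᵐ[μ] g ∧ ‖y‖ ≤ ‖x‖

variable {S : Type*} [MeasurableSpace S] {μ : Measure S}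

/-- The set `K ⊆ X` has uniformly absolutely continuous norm in the B.f.s. `X`. -/
def BFS.UnifAC (B : BFS S μ X) (K : Set X) : Prop :=
  ∀ ε : ℝ, 0 < ε → ∃ δ : ℝ, 0 < δ ∧ ∀ A : Set S, MeasurableSet A →
    μ A < ENNReal.ofReal δ → ∀ x ∈ K, ∀ y : X, B.J y =ᵐ[μ] A.indicator (B.J x) → ‖y‖ ≤ ε

/-- The B.f.s. `X` has absolutely continuous norm. -/
def BFS.ACNorm (B : BFS S μ X) : Prop :=
  ∀ x : X, ∀ ε : ℝ, 0 < ε → ∃ δ : ℝ, 0 < δ ∧ ∀ A : Set S, MeasurableSet A →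
    μ A < ENNReal.ofReal δ → ∀ y : X, B.J y =ᵐ[μ] A.indicator (B.J x) → ‖y‖ ≤ ε

/-- The subsequence splitting property for the B.f.s. `X`. -/
def BFS.SSP (B : BFS S μ X) : Prop :=
  ∀ f : ℕ → X, (∃ C : ℝ, ∀ n, ‖f n‖ ≤ C) →
    ∃ σ : ℕ → ℕ, StrictMono σ ∧
      ∃ g h : ℕ → X,
        (∀ n, f (σ n) = g n + h n) ∧
        (∀ n, (fun s => B.J (g n) s * B.J (h n) s) =ᵐ[μ] 0) ∧
        B.UnifAC (Set.range g) ∧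
        (∀ i j, i ≠ j → (fun s => B.J (h i) s * B.J (h j) s) =ᵐ[μ] 0)

/-- The weak Banach-Saks property for a normed space `Z`: every weakly null sequence has a
subsequence whose arithmetic means converge to zero in norm. -/
def WeakBanachSaks (Z : Type*) [NormedAddCommGroup Z] [NormedSpace ℝ Z] : Prop :=
  ∀ z : ℕ → Z, (∀ φ : Z →L[ℝ] ℝ, Tendsto (fun n => φ (z n)) atTop (nhds 0)) →
    ∃ σ : ℕ → ℕ, StrictMono σ ∧
      Tendsto (fun n : ℕ => ‖(n : ℝ)⁻¹ • ∑ k ∈ Finset.range n, z (σ k)‖) atTop (nhds 0)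

/-- Lebesgue measure on `[0,1]`. -/
def mu01 : Measure ℝ := volume.restrict (Set.Icc (0 : ℝ) 1)

/-- The B.f.s. `X` on `[0,1]` is rearrangement invariant: if the distribution function of a
measurable `g` is dominated by that of (the function representing) `x ∈ X` (equivalently,
`g* ≤ (J x)*`), then `g` represents an element `y ∈ X` with `‖y‖ ≤ ‖x‖`. -/
def BFS.RI {X : Type*} [NormedAddCommGroup X] [NormedSpace ℝ X]
    (B : BFS ℝ mu01 X) : Prop :=
  ∀ (x : X) (g : ℝ → ℝ), AEMeasurable g mu01 →
    (∀ τ : ℝ, 0 < τ → mu01 {s | τ < |g s|} ≤ mu01 {s | τ < |B.J x s|}) →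
    ∃ y : X, B.J y =ᵐ[mu01] g ∧ ‖y‖ ≤ ‖x‖

/-- The kernel operator `T_K` applied to `|f|`: `T_K(|f|)(s) = ∫₀¹ K(s,y) |f(y)| dy`. -/
def TKabs (K : ℝ → ℝ → ℝ≥0∞) (f : ℝ → ℝ) (s : ℝ) : ℝ≥0∞ :=
  ∫⁻ y in Set.Icc (0 : ℝ) 1, K s y * ENNReal.ofReal |f y|

/-- Membership in the optimal domain `[T_K, X] = {f : T_K(|f|) ∈ X}`. -/
def memTK {X : Type*} [NormedAddCommGroup X] [NormedSpace ℝ X]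
    (B : BFS ℝ mu01 X) (K : ℝ → ℝ → ℝ≥0∞) (f : ℝ → ℝ) : Prop :=
  AEMeasurable f mu01 ∧
    ∃ x : X, ∀ᵐ s ∂mu01, TKabs K f s ≠ ⊤ ∧ (TKabs K f s).toReal = B.J x s

/-- The norm `‖f‖_{[T_K,X]} = ‖T_K(|f|)‖_X` on the optimal domain. -/
def nrmTK {X : Type*} [NormedAddCommGroup X] [NormedSpace ℝ X]
    (B : BFS ℝ mu01 X) (K : ℝ → ℝ → ℝ≥0∞) (f : ℝ → ℝ) : ℝ :=
  sInf {r : ℝ | ∃ x : X,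
    (∀ᵐ s ∂mu01, TKabs K f s ≠ ⊤ ∧ (TKabs K f s).toReal = B.J x s) ∧ r = ‖x‖}

theorem BFS.ext_ae (B : BFS S μ X) {x y : X} (h : B.J x =ᵐ[μ] B.J y) : x = y := by
  rw [← sub_eq_zero]
  apply B.eq_zero
  filter_upwards [h] with s hs
  simp [hs]

theorem BFS.norm_mono (B : BFS S μ X) {x y : X} (h : ∀ᵐ s ∂μ, |B.J x s| ≤ |B.J y s|) :
    ‖x‖ ≤ ‖y‖ := by
  obtain ⟨z, hz, hn⟩ := B.ideal y (B.J x) (B.aemeasurable x) h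
  rwa [B.ext_ae hz] at hn

theorem BFS.exists_indicator (B : BFS S μ X) (x : X) {A : Set S} (hA : MeasurableSet A) :
    ∃ y : X, B.J y =ᵐ[μ] A.indicator (B.J x) ∧ ‖y‖ ≤ ‖x‖ := by
  apply B.ideal x _ ((B.aemeasurable x).indicator hA)
  refine Eventually.of_forall fun s => ?_
  by_cases hs : s ∈ A <;> simp [hs]

theorem BFS.SSP.acNorm {B : BFS S μ X} (hX : B.SSP) : B.ACNorm := by
  intro x ε hε
  obtain ⟨σ, -, g, h, hf, hgh, hac, hdis⟩ := hX (fun _ => x) ⟨‖x‖, fun _ => le_rfl⟩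
  obtain ⟨δ, hδ, H⟩ := hac (ε / 2) (by positivity)
  refine ⟨δ, hδ, fun A hA hAδ y hy => ?_⟩
  obtain ⟨y0, hy0, -⟩ := B.exists_indicator (g 0) hA
  obtain ⟨y1, hy1, -⟩ := B.exists_indicator (g 1) hA
  have h0 := H A hA hAδ (g 0) ⟨0, rfl⟩ y0 hy0
  have h1 := H A hA hAδ (g 1) ⟨1, rfl⟩ y1 hy1
  obtain ⟨a0, ha0, hn0⟩ := B.ideal y0 (fun s => |B.J y0 s|)
    ((B.aemeasurable y0).abs) (Eventually.of_forall fun s => by simp)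
  obtain ⟨a1, ha1, hn1⟩ := B.ideal y1 (fun s => |B.J y1 s|)
    ((B.aemeasurable y1).abs) (Eventually.of_forall fun s => by simp)
  have : ‖y‖ ≤ ‖a0 + a1‖ := by
    apply B.norm_mono
    filter_upwards [hy, hy0, hy1, ha0, ha1, hdis 0 1 (by norm_num), hgh 0, hgh 1]
      with s e1 e2 e3 e4 e5 e6 e7 e8
    have f0 := congrFun (congrArg B.J (hf 0)) s
    have f1 := congrFun (congrArg B.J (hf 1)) s
    simp only [map_add, Pi.add_apply] at f0 f1
    rw [e1, map_add, Pi.add_apply, e4, e5, e2, e3]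
    have hnn := abs_nonneg (A.indicator (B.J (g 0)) s)
    have hnn' := abs_nonneg (A.indicator (B.J (g 1)) s)
    rw [abs_of_nonneg (add_nonneg hnn hnn')]
    by_cases hs : s ∈ A
    · simp only [hs, Set.indicator_of_mem] at *
      rcases mul_eq_zero.1 e6 with hh | hh
      · rw [f0, hh, add_zero]; linarith
      · rw [f1, hh, add_zero]; linarith
    · simp [hs]
  have := norm_add_le a0 a1
  linarith

/-- dominated convergence -/
theorem BFS.ACNorm.dct [IsFiniteMeasure μ] {B : BFS S μ X} (hB : B.ACNorm) (x : ℕ → X) (z : X)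
    (u : S → ℝ) (hdom : ∀ n, ∀ᵐ s ∂μ, |B.J (x n) s| ≤ B.J z s)
    (hlim : ∀ᵐ s ∂μ, Tendsto (fun n => B.J (x n) s) atTop (𝓝 (u s))) :
    ∃ y : X, B.J y =ᵐ[μ] u ∧ Tendsto x atTop (𝓝 y) := by
  have hdom' := ae_all_iff.2 hdom
  have hu : AEMeasurable u μ := aemeasurable_of_tendsto_metrizable_ae atTop
    (fun n => B.aemeasurable (x n)) hlim
  have hul : ∀ᵐ s ∂μ, |u s| ≤ B.J z s := by
    filter_upwards [hdom', hlim] with s h1 h2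
    exact le_of_tendsto h2.abs (Eventually.of_forall h1)
  obtain ⟨y, hy, -⟩ := B.ideal z u hu (hul.mono fun s hs => hs.trans (le_abs_self _))
  refine ⟨y, hy, ?_⟩
  rw [Metric.tendsto_atTop]
  intro ε hε
  set η : ℝ := ε / (4 * (‖z‖ + 1)) with hη
  have hηpos : 0 < η := by positivity
  obtain ⟨δ, hδ, H⟩ := hB z (ε / 8) (by positivity)
  let r : ℕ → S → ℝ := fun n s => (B.J (x n) s - B.J y s) / B.J z s
  have hr : TendstoInMeasure μ r atTop (fun _ => (0:ℝ)) := by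
    apply tendstoInMeasure_of_tendsto_ae
    · intro n
      exact (((B.aemeasurable (x n)).sub (B.aemeasurable y)).div
        (B.aemeasurable z)).aestronglyMeasurable
    · filter_upwards [hlim, hy] with s h1 h2
      have := (h1.sub_const (u s)).div_const (B.J z s)
      simpa [r, h2] using this
  have hr' := (tendstoInMeasure_iff_norm.1 hr) η hηpos
  have hev := (tendsto_order.1 hr').2 (ENNReal.ofReal δ) (by simpa using hδ)
  obtain ⟨N, hN⟩ := eventually_atTop.1 hev
  refine ⟨N, fun n hn => ?_⟩
  have hm := hN n hn
  set A0 := {s | η ≤ ‖r n s - 0‖}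
  let A := toMeasurable μ A0
  have hA : MeasurableSet A := measurableSet_toMeasurable _ _
  have hAδ : μ A < ENNReal.ofReal δ := by
    rw [measure_toMeasurable]; exact hm
  obtain ⟨w, hw, -⟩ := B.exists_indicator z hA
  have hwn := H A hA hAδ w hw
  rw [dist_eq_norm]
  have key : ‖x n - y‖ ≤ ‖η • z + (2:ℝ) • w‖ := by
    apply B.norm_mono
    filter_upwards [hdom n, hul, hw, hy] with s h1 h2 h3 h4
    have hz0 : 0 ≤ B.J z s := (abs_nonneg _).trans h1
    simp only [map_sub, Pi.sub_apply, map_add, map_smul, Pi.add_apply, Pi.smul_apply, smul_eq_mul,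
      h3]
    by_cases hs : s ∈ A
    · simp only [hs, Set.indicator_of_mem]
      rw [abs_of_nonneg (a := η * _ + _) (by positivity), h4]
      have := abs_sub (B.J (x n) s) (u s)
      have : 0 ≤ η * B.J z s := by positivity
      linarith
    · simp only [hs, not_false_eq_true, Set.indicator_of_notMem, mul_zero, add_zero]
      rw [abs_of_nonneg (a := η * _) (by positivity)]
      have hs' : s ∉ A0 := fun h => hs (subset_toMeasurable _ _ h)
      simp only [A0, Set.mem_ofPred_eq, sub_zero, not_le, r, Real.norm_eq_abs, abs_div] at hs'
      rcases hz0.eq_or_lt with h0 | h0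
      · rw [← h0] at h1 h2
        have e1 := abs_nonpos_iff.1 h1
        have e2 := abs_nonpos_iff.1 h2
        rw [h4, e1, e2, ← h0]; simp
      · rw [abs_of_pos h0, div_lt_iff₀ h0] at hs'
        exact hs'.le
  have h5 : ‖η • z + (2:ℝ) • w‖ ≤ η * ‖z‖ + 2 * ‖w‖ := by
    refine (norm_add_le _ _).trans ?_
    rw [norm_smul, norm_smul, Real.norm_eq_abs, Real.norm_eq_abs, abs_of_pos hηpos]
    norm_num
  have h6 : η * ‖z‖ ≤ ε / 4 := by
    have : η * (‖z‖ + 1) = ε / 4 := by rw [hη]; field_simp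
    nlinarith
  linarith
theorem BFS.ACNorm.limit_unique [IsFiniteMeasure μ] {B : BFS S μ X} (hB : B.ACNorm) (x : ℕ → X)
    (y : X) (u : S → ℝ) (hxy : Tendsto x atTop (𝓝 y))
    (hlim : ∀ᵐ s ∂μ, Tendsto (fun n => B.J (x n) s) atTop (𝓝 (u s))) : B.J y =ᵐ[μ] u := by
  have main : ∀ z : X, ∀ᵐ s ∂μ, min |u s - B.J y s| |B.J z s| = 0 := by
    intro z
    obtain ⟨z', hz', -⟩ := B.ideal z (fun s => |B.J z s|) (B.aemeasurable z).abs
      (Eventually.of_forall fun s => by simp)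
    have hq : ∀ n, ∃ q : X, B.J q =ᵐ[μ] (fun s => min |B.J (x n - y) s| |B.J z s|) ∧
        ‖q‖ ≤ ‖x n - y‖ := by
      intro n
      apply B.ideal
      · exact (B.aemeasurable _).abs.min (B.aemeasurable _).abs
      · refine Eventually.of_forall fun s => ?_
        rw [abs_of_nonneg (by positivity)]
        exact min_le_left _ _
    choose q hq hqn using hq
    obtain ⟨p, hp, hqp⟩ := hB.dct q z' (fun s => min |u s - B.J y s| |B.J z s|)
      (by
        intro n
        filter_upwards [hq n, hz'] with s h1 h2
        rw [h1, h2, abs_of_nonneg (by positivity)]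
        exact min_le_right _ _)
      (by
        filter_upwards [ae_all_iff.2 hq, hlim] with s h1 h2
        simp only [h1, map_sub, Pi.sub_apply]
        exact ((h2.sub_const _).abs).min tendsto_const_nhds)
    have h0 : Tendsto q atTop (𝓝 0) := by
      apply squeeze_zero_norm hqn
      have := (hxy.sub_const y).norm
      simpa using this
    have : p = 0 := tendsto_nhds_unique hqp h0
    filter_upwards [hp] with s hs
    rw [← hs, this]; simp
  filter_upwards [main y, ae_all_iff.2 fun n => main (x n), hlim] with s h1 h2 h3
  by_contra hne
  have hpos : |u s - B.J y s| ≠ 0 := by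
    rw [abs_ne_zero, sub_ne_zero]; exact fun h => hne h.symm
  have aux : ∀ c : ℝ, min |u s - B.J y s| |c| = 0 → c = 0 := by
    intro c hc
    rcases min_choice |u s - B.J y s| |c| with h | h
    · exact absurd (h.symm.trans hc) hpos
    · exact abs_eq_zero.1 (h.symm.trans hc)
  have e1 := aux _ h1
  have e2 : ∀ n, B.J (x n) s = 0 := fun n => aux _ (h2 n)
  simp only [e2] at h3
  have := tendsto_nhds_unique h3 tendsto_const_nhds
  exact hne (by rw [e1, this])

theorem BFS.SSP.levi [IsFiniteMeasure μ] [CompleteSpace X] {B : BFS S μ X} (hX : B.SSP)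
    (x : ℕ → X) (C : ℝ) (hC : ∀ n, ‖x n‖ ≤ C) (hpos : ∀ n, ∀ᵐ s ∂μ, 0 ≤ B.J (x n) s)
    (hmono : ∀ n, ∀ᵐ s ∂μ, B.J (x n) s ≤ B.J (x (n + 1)) s) :
    ∃ y, Tendsto x atTop (𝓝 y) := by
  have hac := hX.acNorm
  have hpos' := ae_all_iff.2 hpos
  have hmono' : ∀ᵐ s ∂μ, Monotone fun n => B.J (x n) s := by
    filter_upwards [ae_all_iff.2 hmono] with s hs
    exact monotone_nat_of_le_succ hs
  -- boundedness a.e.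
  have hbdd : ∀ᵐ s ∂μ, BddAbove (Set.range fun n => B.J (x n) s) := by
    let v : S → ℝ≥0∞ := fun s => ⨆ n, ENNReal.ofReal (B.J (x n) s)
    have hv : AEMeasurable v μ := AEMeasurable.iSup fun n => (B.aemeasurable _).ennreal_ofReal
    let D : Set S := {s | hv.mk v s = ⊤}
    have hD : MeasurableSet D := hv.measurable_mk (measurableSet_singleton ⊤)
    have hDlim : ∀ᵐ s ∂μ, s ∈ D → Tendsto (fun n => B.J (x n) s) atTop atTop := by
      filter_upwards [hv.ae_eq_mk, hmono'] with s h1 h2 h3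
      have h3' : v s = ⊤ := h1.trans h3
      rcases tendsto_atTop_of_monotone h2 with h | ⟨l, hl⟩
      · exact h
      · exfalso
        have : v s ≤ ENNReal.ofReal l := iSup_le fun n =>
          ENNReal.ofReal_le_ofReal (h2.ge_of_tendsto hl n)
        rw [h3'] at this
        simp at this
    have hDz : ∀ k, ∀ᵐ s ∂μ, s ∈ D → B.J (x k) s = 0 := by
      intro k
      obtain ⟨zD, hzD, -⟩ := B.exists_indicator (x k) hD
      have hle : ∀ M : ℕ, 0 < M → ‖zD‖ ≤ C / M := by
        intro M hM
        have hM' : (0:ℝ) < M := by exact_mod_cast hM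
        have hw : ∀ n, ∃ w : X, B.J w =ᵐ[μ]
            D.indicator (fun s => min ((M:ℝ)⁻¹ * B.J (x n) s) (B.J (x k) s)) ∧
            ‖w‖ ≤ ‖(M:ℝ)⁻¹ • x n‖ := by
          intro n
          apply B.ideal
          · exact (((B.aemeasurable _).const_mul _).min (B.aemeasurable _)).indicator hD
          · filter_upwards [hpos'] with s hs
            have := hs n
            have := hs k
            by_cases h : s ∈ D
            · simp only [h, Set.indicator_of_mem, map_smul, Pi.smul_apply, smul_eq_mul]
              rw [abs_of_nonneg (by positivity), abs_of_nonneg (by positivity)]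
              exact min_le_left _ _
            · simp only [h, not_false_eq_true, Set.indicator_of_notMem, abs_zero]
              positivity
        choose w hw hwn using hw
        obtain ⟨y, hy, hty⟩ := hac.dct w (x k) (D.indicator (B.J (x k)))
          (by
            intro n
            filter_upwards [hw n, hpos'] with s h1 hs
            have := hs n
            have := hs k
            rw [h1]
            by_cases h : s ∈ D
            · simp only [h, Set.indicator_of_mem]
              rw [abs_of_nonneg (by positivity)]
              exact min_le_right _ _
            · simp [h, hs k])
          (by
            filter_upwards [ae_all_iff.2 hw, hDlim] with s h1 h2
            simp only [h1]
            by_cases h : s ∈ D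
            · simp only [h, Set.indicator_of_mem]
              have h3 := (h2 h).const_mul_atTop (inv_pos.2 hM')
              apply tendsto_const_nhds.congr'
              filter_upwards [h3.eventually_ge_atTop (B.J (x k) s)] with n hn
              exact (min_eq_right hn).symm
            · simp [h])
        have : y = zD := B.ext_ae (hy.trans hzD.symm)
        rw [← this]
        refine le_of_tendsto hty.norm (Eventually.of_forall fun n => (hwn n).trans ?_)
        rw [norm_smul, norm_inv, Real.norm_natCast, div_eq_inv_mul]
        gcongr
        exact hC n
      have hz : ‖zD‖ ≤ 0 := by
        refine ge_of_tendsto (tendsto_const_div_atTop_nhds_zero_nat C) ?_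
        filter_upwards [eventually_gt_atTop 0] with M hM using hle M hM
      have hz0 : zD = 0 := norm_le_zero_iff.1 hz
      rw [hz0] at hzD
      filter_upwards [hzD] with s hs h
      simpa [h] using hs.symm
    filter_upwards [hmono', hv.ae_eq_mk, hDlim, ae_all_iff.2 hDz] with s h1 h2 h3 h4
    have hs : s ∉ D := by
      intro h
      have := h3 h
      simp only [fun k => h4 k h] at this
      exact not_tendsto_const_atTop _ _ this
    have hvs : v s ≠ ⊤ := by rw [h2]; exact hs
    refine ⟨(v s).toReal, ?_⟩
    rintro _ ⟨n, rfl⟩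
    have : ENNReal.ofReal (B.J (x n) s) ≤ v s := le_iSup (fun n => ENNReal.ofReal (B.J (x n) s)) n
    exact (ENNReal.ofReal_le_iff_le_toReal hvs).1 this
  let u : S → ℝ := fun s => ⨆ n, B.J (x n) s
  have hlim : ∀ᵐ s ∂μ, Tendsto (fun n => B.J (x n) s) atTop (𝓝 (u s)) := by
    filter_upwards [hbdd, hmono'] with s h1 h2
    exact tendsto_atTop_ciSup h2 h1
  have hle : ∀ᵐ s ∂μ, ∀ n, B.J (x n) s ≤ u s := by
    filter_upwards [hbdd] with s h1 n
    exact le_ciSup h1 n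
  have hu : AEMeasurable u μ := aemeasurable_of_tendsto_metrizable_ae atTop
    (fun n => B.aemeasurable (x n)) hlim
  obtain ⟨σ, hσ, g, h, hf, hgh, hUAC, hdis⟩ := hX x ⟨C, hC⟩
  have hdis' : ∀ᵐ s ∂μ, ∀ i j, i ≠ j → B.J (h i) s * B.J (h j) s = 0 := by
    rw [ae_all_iff]; intro i; rw [ae_all_iff]; intro j
    by_cases hij : i = j
    · simp [hij]
    · filter_upwards [hdis i j hij] with s hs _ using hs
  have hsum : ∀ n s, B.J (x (σ n)) s = B.J (g n) s + B.J (h n) s := by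
    intro n s
    rw [hf n, map_add]; rfl
  have hgle : ∀ n, ∀ᵐ s ∂μ, |B.J (g n) s| ≤ u s := by
    intro n
    filter_upwards [hgh n, hle, hpos'] with s h1 h2 h3
    have hs := hsum n s
    have h4 := h2 (σ n)
    have h5 := h3 (σ n)
    rcases mul_eq_zero.1 h1 with h6 | h6
    · rw [h6]; simp; linarith
    · rw [h6, add_zero] at hs
      rw [← hs, abs_of_nonneg h5]; exact h4
  have hglim : ∀ᵐ s ∂μ, Tendsto (fun n => B.J (g n) s) atTop (𝓝 (u s)) := by
    filter_upwards [hlim, hdis'] with s h1 h2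
    have h3 : ∀ᶠ n in atTop, B.J (h n) s = 0 := by
      by_cases hex : ∃ i, B.J (h i) s ≠ 0
      · obtain ⟨i, hi⟩ := hex
        filter_upwards [eventually_gt_atTop i] with n hn
        rcases mul_eq_zero.1 (h2 i n hn.ne) with h | h
        · exact absurd h hi
        · exact h
      · push Not at hex
        exact Eventually.of_forall hex
    apply (h1.comp hσ.tendsto_atTop).congr'
    filter_upwards [h3] with n hn
    simp [hsum, hn]
  have hcau : CauchySeq g := by
    rw [Metric.cauchySeq_iff']
    intro ε hε
    obtain ⟨δ, hδ, H⟩ := hUAC (ε / 4) (by positivity)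
    let r : ℕ → S → ℝ := fun k s => (u s - B.J (x k) s) / u s
    have hr : TendstoInMeasure μ r atTop (fun _ => (0:ℝ)) := by
      apply tendstoInMeasure_of_tendsto_ae
      · intro n
        exact ((hu.sub (B.aemeasurable (x n))).div hu).aestronglyMeasurable
      · filter_upwards [hlim] with s h1
        have := (h1.const_sub (u s)).div_const (u s)
        simpa [r] using this
    have hr' := (tendstoInMeasure_iff_norm.1 hr) (1/2) (by norm_num)
    have hev := (tendsto_order.1 hr').2 (ENNReal.ofReal δ) (by simpa using hδ)
    obtain ⟨k, hk⟩ := hev.exists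
    set A0 := {s | 1/2 ≤ ‖r k s - 0‖}
    let A := toMeasurable μ A0
    have hA : MeasurableSet A := measurableSet_toMeasurable _ _
    have hAδ : μ A < ENNReal.ofReal δ := by
      rw [measure_toMeasurable]; exact hk
    choose b hb _ using fun n => B.exists_indicator (g n) hA
    choose a ha _ using fun n => B.exists_indicator (g n) hA.compl
    have hab : ∀ n, g n = a n + b n := by
      intro n
      apply B.ext_ae
      filter_upwards [ha n, hb n] with s h1 h2
      rw [map_add, Pi.add_apply, h1, h2]
      by_cases hs : s ∈ A <;> simp [hs]
    have hbn : ∀ n, ‖b n‖ ≤ ε / 4 := fun n => H A hA hAδ (g n) ⟨n, rfl⟩ _ (hb n)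
    obtain ⟨y, -, hy⟩ := hac.dct a ((2:ℝ) • x k) (Aᶜ.indicator u)
      (by
        intro n
        filter_upwards [ha n, hgle n, hle, hpos'] with s h1 h2 h3 h4
        have := h4 k
        rw [h1]
        simp only [map_smul, Pi.smul_apply, smul_eq_mul]
        by_cases hs : s ∈ A
        · simp [hs, h4 k]
        · have hs' : s ∉ A0 := fun h => hs (subset_toMeasurable _ _ h)
          simp only [A0, Set.mem_ofPred_eq, sub_zero, not_le, r, Real.norm_eq_abs, abs_div] at hs'
          simp only [Set.mem_compl_iff, hs, not_false_eq_true, Set.indicator_of_mem]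
          refine h2.trans ?_
          have hu0 : 0 ≤ u s := (h4 k).trans (h3 k)
          rcases hu0.eq_or_lt with h0 | h0
          · rw [← h0]; positivity
          · rw [abs_of_pos h0, div_lt_iff₀ h0] at hs'
            have := (le_abs_self _).trans_lt hs'
            linarith)
      (by
        filter_upwards [ae_all_iff.2 ha, hglim] with s h1 h2
        simp only [h1]
        by_cases hs : s ∈ A <;> simp [hs, h2])
    obtain ⟨N, hN⟩ := Metric.cauchySeq_iff'.1 hy.cauchySeq (ε / 4) (by positivity)
    refine ⟨N, fun n hn => ?_⟩
    have h1 := hN n hn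
    rw [dist_eq_norm] at h1 ⊢
    rw [hab n, hab N]
    calc ‖a n + b n - (a N + b N)‖ = ‖(a n - a N) + (b n - b N)‖ := by congr 1; abel
      _ ≤ ‖a n - a N‖ + (‖b n‖ + ‖b N‖) :=
        (norm_add_le _ _).trans (by gcongr; exact norm_sub_le _ _)
      _ < ε := by linarith [hbn n, hbn N]
  obtain ⟨y, hy⟩ := cauchySeq_tendsto_of_complete hcau
  have hyu := hac.limit_unique g y u hy hglim
  obtain ⟨y', -, hy'⟩ := hac.dct x y u
    (by
      intro n
      filter_upwards [hyu, hle, hpos'] with s h1 h2 h3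
      rw [h1, abs_of_nonneg (h3 n)]
      exact h2 n)
    hlim
  exact ⟨y', hy'⟩
theorem weakStar_diag {V : Type*} [NormedAddCommGroup V] [NormedSpace ℝ V]
    [TopologicalSpace.SeparableSpace V] (φ : ℕ → ℕ → (V →L[ℝ] ℝ)) (C : ℕ → ℝ)
    (hφ : ∀ n M, ‖φ n M‖ ≤ C M) :
    ∃ σ : ℕ → ℕ, StrictMono σ ∧ ∃ ψ : ℕ → (V →L[ℝ] ℝ),
      ∀ M v, Tendsto (fun n => φ (σ n) M v) atTop (𝓝 (ψ M v)) := by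
  let Bl : ℕ → Set (WeakDual ℝ V) := fun M =>
    WeakDual.toStrongDual ⁻¹' Metric.closedBall (0 : StrongDual ℝ V) (C M)
  have hcomp : ∀ M, IsCompact (Bl M) := fun M => WeakDual.isCompact_closedBall _ _
  have : ∀ M, CompactSpace (Bl M) := fun M => isCompact_iff_compactSpace.1 (hcomp M)
  have : ∀ M, TopologicalSpace.MetrizableSpace (Bl M) := fun M =>
    WeakDual.metrizable_of_isCompact ℝ V (Bl M) (hcomp M)
  let Φ : ℕ → (∀ M, Bl M) := fun n M => ⟨StrongDual.toWeakDual (φ n M), by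
    simpa [Bl] using hφ n M⟩
  have : FirstCountableTopology (∀ M, Bl M) := inferInstance
  obtain ⟨a, σ, hσ, ha⟩ := CompactSpace.tendsto_subseq Φ
  refine ⟨σ, hσ, fun M => WeakDual.toStrongDual (a M).1, fun M v => ?_⟩
  have h1 : Tendsto (fun n => (Φ (σ n) M)) atTop (𝓝 (a M)) := (tendsto_pi_nhds.1 ha) M
  have h2 := (continuous_subtype_val.tendsto (a M)).comp h1
  have h3 := ((WeakDual.eval_continuous v).tendsto (a M).1).comp h2
  exact h3

theorem hilbert_select {H : Type*} [NormedAddCommGroup H] [InnerProductSpace ℝ H]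
    (d : ℕ → ℕ → H) (hd : ∀ M v, Tendsto (fun n => inner ℝ v (d n M)) atTop (𝓝 0)) :
    ∃ τ : ℕ → ℕ, StrictMono τ ∧ ∀ i j, i < j → ∀ M, M ≤ j →
      |inner ℝ (d (τ i) M) (d (τ j) M)| ≤ 1 / ((j:ℝ) + 1) := by
  have step : ∀ m : ℕ, ∃ N, m < N ∧ ∀ n, N ≤ n → ∀ i, i ≤ m → ∀ M, M ≤ m + 1 →
      |inner ℝ (d i M) (d n M)| ≤ 1 / ((m:ℝ) + 2) := by
    intro m
    have : ∀ᶠ n in atTop, ∀ i ∈ Set.Iic m, ∀ M ∈ Set.Iic (m + 1),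
        |inner ℝ (d i M) (d n M)| ≤ 1 / ((m:ℝ) + 2) := by
      rw [eventually_all_finite (Set.finite_Iic m)]
      intro i _
      rw [eventually_all_finite (Set.finite_Iic (m + 1))]
      intro M _
      have := (hd M (d i M)).abs
      rw [abs_zero] at this
      exact this.eventually_le_const (by positivity)
    obtain ⟨N, hN⟩ := eventually_atTop.1 this
    exact ⟨max N (m + 1), by simp, fun n hn i hi M hM =>
      hN n ((le_max_left _ _).trans hn) i hi M hM⟩
  choose b hb hb' using step
  let τ : ℕ → ℕ := fun j => b^[j] 0
  have hτs : ∀ j, τ (j + 1) = b (τ j) := fun j => Function.iterate_succ_apply' b j 0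
  have hτ : StrictMono τ := strictMono_nat_of_lt_succ fun j => by rw [hτs]; exact hb _
  refine ⟨τ, hτ, fun i j hij M hM => ?_⟩
  obtain ⟨k, rfl⟩ : ∃ k, j = k + 1 := ⟨j - 1, by omega⟩
  have hk : k ≤ τ k := hτ.id_le k
  have h1 := hb' (τ k) (τ (k + 1)) (hτs k).ge (τ i) (hτ.monotone (by omega)) M (by omega)
  refine h1.trans ?_
  push_cast
  have : (k:ℝ) ≤ τ k := by exact_mod_cast hk
  apply one_div_le_one_div_of_le <;> linarith

theorem hilbert_cesaro {H : Type*} [NormedAddCommGroup H] [InnerProductSpace ℝ H]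
    (d : ℕ → H) (C : ℝ) (hC : ∀ n, ‖d n‖ ≤ C) (M : ℕ)
    (hd : ∀ i j, i < j → M ≤ j → |inner ℝ (d i) (d j)| ≤ 1 / ((j:ℝ) + 1)) :
    Tendsto (fun n : ℕ => (n:ℝ)⁻¹ • ∑ k ∈ Finset.range n, d k) atTop (𝓝 0) := by
  set Sm : ℕ → H := fun n => ∑ k ∈ Finset.range n, d k with hSm
  have hC0 : 0 ≤ C := (norm_nonneg _).trans (hC 0)
  have hin : ∀ j, M ≤ j → |inner ℝ (Sm j) (d j)| ≤ 1 := by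
    intro j hj
    rw [hSm]; simp only
    rw [sum_inner]
    refine (Finset.abs_sum_le_sum_abs _ _).trans ?_
    refine (Finset.sum_le_sum (fun i hi => hd i j (Finset.mem_range.1 hi) hj)).trans ?_
    rw [Finset.sum_const, Finset.card_range, nsmul_eq_mul, mul_one_div, div_le_one (by positivity)]
    linarith
  have hsq : ∀ n, ‖Sm (M + n)‖ ^ 2 ≤ ‖Sm M‖ ^ 2 + (C ^ 2 + 2) * n := by
    intro n
    induction n with
    | zero => simp
    | succ n ih =>
      have h1 : Sm (M + (n + 1)) = Sm (M + n) + d (M + n) := by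
        rw [← add_assoc]; exact Finset.sum_range_succ _ _
      rw [h1, norm_add_sq_real]
      have h2 := (abs_le.1 (hin (M + n) (by omega))).2
      have h3 : ‖d (M + n)‖ ^ 2 ≤ C ^ 2 := by gcongr; exact hC _
      push_cast
      linarith
  rw [tendsto_zero_iff_norm_tendsto_zero]
  have hlim : Tendsto (fun n : ℕ => Real.sqrt ((‖Sm M‖ ^ 2 / n + (C ^ 2 + 2)) / n)) atTop (𝓝 0) := by
    have h1 := (tendsto_const_div_atTop_nhds_zero_nat (‖Sm M‖ ^ 2)).add_const (C ^ 2 + 2)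
    have h2 := h1.div_atTop tendsto_natCast_atTop_atTop
    have h3 := (Real.continuous_sqrt.tendsto 0).comp h2
    simpa [Function.comp_def] using h3
  refine squeeze_zero' (Eventually.of_forall fun n => norm_nonneg _) ?_ hlim
  filter_upwards [eventually_ge_atTop (M + 1)] with n hn
  apply Real.le_sqrt_of_sq_le
  obtain ⟨k, rfl⟩ : ∃ k, n = M + k := ⟨n - M, by omega⟩
  have hn0 : (0:ℝ) < ((M + k : ℕ) : ℝ) := by exact_mod_cast (by omega : 0 < M + k)
  rw [norm_smul, norm_inv, Real.norm_natCast, mul_pow, inv_pow, ← div_eq_inv_mul,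
    div_le_div_iff₀ (by positivity) hn0]
  have h := hsq k
  have hk : (k:ℝ) ≤ ((M + k : ℕ) : ℝ) := by push_cast; linarith [(Nat.cast_nonneg M : (0:ℝ) ≤ M)]
  have hh : ‖Sm (M + k)‖ ^ 2 ≤ ‖Sm M‖ ^ 2 + (C ^ 2 + 2) * ((M + k : ℕ) : ℝ) := by
    refine h.trans ?_
    gcongr
  set N : ℝ := ((M + k : ℕ) : ℝ)
  have e : (‖Sm M‖ ^ 2 / N + (C ^ 2 + 2)) * N ^ 2 = (‖Sm M‖ ^ 2 + (C ^ 2 + 2) * N) * N := by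
    field_simp
  rw [e]
  gcongr

/-- Closure properties of a (semi)normed function space. -/
structure IsSNS (mem : (S → ℝ) → Prop) (nrm : (S → ℝ) → ℝ) : Prop where
  zero : mem 0
  add : ∀ {f g}, mem f → mem g → mem (f + g)
  smul : ∀ (c : ℝ) {f}, mem f → mem (c • f)
  nadd : ∀ {f g}, mem f → mem g → nrm (f + g) ≤ nrm f + nrm g
  nsmul : ∀ (c : ℝ) {f}, mem f → nrm (c • f) = |c| * nrm f
  nonneg : ∀ {f}, mem f → 0 ≤ nrm f

def IsSNS.sub {mem : (S → ℝ) → Prop} {nrm : (S → ℝ) → ℝ} (h : IsSNS mem nrm) :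
    Submodule ℝ (S → ℝ) where
  carrier := {f | mem f}
  add_mem' := h.add
  zero_mem' := h.zero
  smul_mem' c _ hf := h.smul c hf

def IsSNS.Ty {mem : (S → ℝ) → Prop} {nrm : (S → ℝ) → ℝ} (h : IsSNS mem nrm) : Type _ := h.sub

instance {mem : (S → ℝ) → Prop} {nrm : (S → ℝ) → ℝ} (h : IsSNS mem nrm) : AddCommGroup h.Ty :=
  inferInstanceAs (AddCommGroup h.sub)

instance {mem : (S → ℝ) → Prop} {nrm : (S → ℝ) → ℝ} (h : IsSNS mem nrm) : Module ℝ h.Ty :=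
  inferInstanceAs (Module ℝ h.sub)

def IsSNS.semi {mem : (S → ℝ) → Prop} {nrm : (S → ℝ) → ℝ} (h : IsSNS mem nrm) :
    Seminorm ℝ h.Ty :=
  Seminorm.of (fun f : h.Ty => nrm (f : h.sub).1)
    (fun f g => h.nadd (f : h.sub).2 (g : h.sub).2)
    (fun c f => h.nsmul c (f : h.sub).2)

instance {mem : (S → ℝ) → Prop} {nrm : (S → ℝ) → ℝ} (h : IsSNS mem nrm) :
    SeminormedAddCommGroup h.Ty :=
  AddGroupSeminorm.toSeminormedAddCommGroup h.semi.toAddGroupSeminorm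

instance {mem : (S → ℝ) → Prop} {nrm : (S → ℝ) → ℝ} (h : IsSNS mem nrm) :
    NormedSpace ℝ h.Ty where
  norm_smul_le c f := (h.nsmul c (f : h.sub).2).le

def IsSNS.mk' {mem : (S → ℝ) → Prop} {nrm : (S → ℝ) → ℝ} (h : IsSNS mem nrm) (f : S → ℝ)
    (hf : mem f) : h.Ty := (⟨f, hf⟩ : h.sub)

theorem IsSNS.norm_mk' {mem : (S → ℝ) → Prop} {nrm : (S → ℝ) → ℝ} (h : IsSNS mem nrm)
    (f : S → ℝ) (hf : mem f) : ‖h.mk' f hf‖ = nrm f := rfl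

theorem IsSNS.functional {mem : (S → ℝ) → Prop} {nrm : (S → ℝ) → ℝ} (h : IsSNS mem nrm)
    (φ : h.Ty →L[ℝ] ℝ) : ∃ T : (S → ℝ) → ℝ, IsBddLinFunctional mem nrm T ∧
      (∀ f, mem f → |T f| ≤ ‖φ‖ * nrm f) ∧
      ∀ f (hf : mem f), T f = φ (h.mk' f hf) := by
  classical
  let T : (S → ℝ) → ℝ := fun f => if hf : mem f then φ (h.mk' f hf) else 0
  have hT : ∀ f (hf : mem f), T f = φ (h.mk' f hf) := fun f hf => dif_pos hf
  have hb : ∀ f, mem f → |T f| ≤ ‖φ‖ * nrm f := by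
    intro f hf
    rw [hT f hf]
    exact φ.le_opNorm _
  refine ⟨T, ⟨?_, ?_, ⟨‖φ‖, hb⟩⟩, hb, hT⟩
  · intro f g hf hg
    rw [hT f hf, hT g hg, hT _ (h.add hf hg), ← map_add]
    rfl
  · intro c f hf
    rw [hT f hf, hT _ (h.smul c hf), ← smul_eq_mul, ← map_smul]
    rfl

theorem IsSNS.bounded {mem : (S → ℝ) → Prop} {nrm : (S → ℝ) → ℝ} (h : IsSNS mem nrm)
    (f : ℕ → S → ℝ) (hf : ∀ n, mem (f n)) (hw : WeaklyNullSeq mem nrm f) :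
    ∃ C, ∀ n, nrm (f n) ≤ C := by
  let ev : ℕ → ((h.Ty →L[ℝ] ℝ) →L[ℝ] ℝ) := fun n =>
    ContinuousLinearMap.apply ℝ ℝ (h.mk' (f n) (hf n))
  obtain ⟨C, hC⟩ := banach_steinhaus (g := ev) (by
    intro φ
    obtain ⟨T, hT, -, hTφ⟩ := h.functional φ
    have := hw T hT
    obtain ⟨C, hC⟩ := (Metric.isBounded_range_of_tendsto _ this).exists_norm_le
    refine ⟨C, fun n => ?_⟩
    have h1 := hC _ ⟨n, rfl⟩
    simp only [hTφ _ (hf n)] at h1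
    exact h1)
  refine ⟨C, fun n => ?_⟩
  obtain ⟨φ, hφ1, hφ2⟩ := exists_dual_vector'' ℝ (h.mk' (f n) (hf n))
  have h1 := (ev n).le_of_opNorm_le (hC n) φ
  have h2 : ev n φ = ‖h.mk' (f n) (hf n)‖ := hφ2
  have hC0 : 0 ≤ C := (norm_nonneg _).trans (hC n)
  rw [h2, Real.norm_eq_abs, h.norm_mk', abs_of_nonneg (h.nonneg (hf n))] at h1
  refine h1.trans ?_
  nlinarith

theorem IsSNS.dual {mem : (S → ℝ) → Prop} {nrm : (S → ℝ) → ℝ} (h : IsSNS mem nrm)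
    (f : S → ℝ) (hf : mem f) : ∃ T, IsBddLinFunctional mem nrm T ∧ (∀ g, mem g → |T g| ≤ nrm g) ∧
      T f = nrm f := by
  obtain ⟨φ, hφ1, hφ2⟩ := exists_dual_vector'' ℝ (h.mk' f hf)
  obtain ⟨T, hT, hb, hTφ⟩ := h.functional φ
  refine ⟨T, hT, fun g hg => (hb g hg).trans ?_, ?_⟩
  · have := h.nonneg hg
    nlinarith
  · rw [hTφ f hf, hφ2]; rfl
instance : IsFiniteMeasure mu01 := by unfold mu01; infer_instance

section Kernel

variable {B : BFS ℝ mu01 X} {K : ℝ → ℝ → ℝ≥0∞}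

theorem TKabs_eq (K : ℝ → ℝ → ℝ≥0∞) (f : ℝ → ℝ) (s : ℝ) :
    TKabs K f s = ∫⁻ y, K s y * ENNReal.ofReal |f y| ∂mu01 := rfl

theorem TKabs_mono {f g : ℝ → ℝ} (h : ∀ᵐ y ∂mu01, |f y| ≤ |g y|) (s : ℝ) :
    TKabs K f s ≤ TKabs K g s := by
  rw [TKabs_eq, TKabs_eq]
  apply lintegral_mono_ae
  filter_upwards [h] with y hy
  gcongr

theorem TKabs_measurable (hK : Measurable (Function.uncurry K)) {f : ℝ → ℝ}
    (hf : AEMeasurable f mu01) : Measurable (TKabs K f) := by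
  have h1 : TKabs K f = fun s => ∫⁻ y, K s y * ENNReal.ofReal |hf.mk f y| ∂mu01 := by
    funext s
    rw [TKabs_eq]
    apply lintegral_congr_ae
    filter_upwards [hf.ae_eq_mk] with y hy
    rw [hy]
  rw [h1]
  have : Measurable fun p : ℝ × ℝ => K p.1 p.2 * ENNReal.ofReal |hf.mk f p.2| := by
    apply Measurable.mul hK
    exact (continuous_abs.measurable.comp (hf.measurable_mk.comp measurable_snd)).ennreal_ofReal
  exact this.lintegral_prod_right'

theorem K_measurable (hK : Measurable (Function.uncurry K)) (s : ℝ) : Measurable (K s) :=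
  hK.comp (measurable_const.prodMk measurable_id)

theorem TKabs_add_le (hK : Measurable (Function.uncurry K)) {f g : ℝ → ℝ}
    (hf : AEMeasurable f mu01) (s : ℝ) :
    TKabs K (f + g) s ≤ TKabs K f s + TKabs K g s := by
  rw [TKabs_eq, TKabs_eq, TKabs_eq, ← lintegral_add_left']
  · apply lintegral_mono
    intro y
    simp only [Pi.add_apply]
    rw [← mul_add, ← ENNReal.ofReal_add (abs_nonneg _) (abs_nonneg _)]
    gcongr
    exact abs_add_le _ _
  · exact (K_measurable hK s).aemeasurable.mul
      (continuous_abs.measurable.comp_aemeasurable hf).ennreal_ofReal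

theorem TKabs_smul (hK : Measurable (Function.uncurry K)) {f : ℝ → ℝ}
    (hf : AEMeasurable f mu01) (c : ℝ) (s : ℝ) :
    TKabs K (c • f) s = ENNReal.ofReal |c| * TKabs K f s := by
  rw [TKabs_eq, TKabs_eq, ← lintegral_const_mul'']
  · apply lintegral_congr
    intro y
    simp only [Pi.smul_apply, smul_eq_mul, abs_mul]
    rw [ENNReal.ofReal_mul (abs_nonneg _)]
    ring
  · exact (K_measurable hK s).aemeasurable.mul
      (continuous_abs.measurable.comp_aemeasurable hf).ennreal_ofReal

def Rep (B : BFS ℝ mu01 X) (K : ℝ → ℝ → ℝ≥0∞) (f : ℝ → ℝ) (x : X) : Prop :=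
  ∀ᵐ s ∂mu01, TKabs K f s ≠ ⊤ ∧ (TKabs K f s).toReal = B.J x s

def Dom (B : BFS ℝ mu01 X) (K : ℝ → ℝ → ℝ≥0∞) (f : ℝ → ℝ) (x : X) : Prop :=
  ∀ᵐ s ∂mu01, TKabs K f s ≠ ⊤ ∧ (TKabs K f s).toReal ≤ B.J x s

theorem Rep.dom {f : ℝ → ℝ} {x : X} (h : Rep B K f x) : Dom B K f x :=
  h.mono fun _ hs => ⟨hs.1, hs.2.le⟩

theorem Rep.nrm {f : ℝ → ℝ} {x : X} (h : Rep B K f x) : nrmTK B K f = ‖x‖ := by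
  have : {r : ℝ | ∃ x : X,
    (∀ᵐ s ∂mu01, TKabs K f s ≠ ⊤ ∧ (TKabs K f s).toReal = B.J x s) ∧ r = ‖x‖} = {‖x‖} := by
    ext r
    constructor
    · rintro ⟨y, hy, rfl⟩
      have : y = x := B.ext_ae (by filter_upwards [h, hy] with s h1 h2; rw [← h1.2, ← h2.2])
      simp [this]
    · rintro rfl
      exact ⟨x, h, rfl⟩
  rw [nrmTK, this, csInf_singleton]

theorem Dom.rep (hK : Measurable (Function.uncurry K)) {f : ℝ → ℝ} (hf : AEMeasurable f mu01)
    {x : X} (h : Dom B K f x) : ∃ y, Rep B K f y ∧ ‖y‖ ≤ ‖x‖ := by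
  obtain ⟨y, hy, hn⟩ := B.ideal x (fun s => (TKabs K f s).toReal)
    (TKabs_measurable hK hf).ennreal_toReal.aemeasurable (by
      filter_upwards [h] with s hs
      rw [abs_of_nonneg ENNReal.toReal_nonneg]
      exact hs.2.trans (le_abs_self _))
  refine ⟨y, ?_, hn⟩
  filter_upwards [h, hy] with s h1 h2
  exact ⟨h1.1, h2.symm⟩

theorem Dom.mem (hK : Measurable (Function.uncurry K)) {f : ℝ → ℝ} (hf : AEMeasurable f mu01)
    {x : X} (h : Dom B K f x) : memTK B K f := by
  obtain ⟨y, hy, -⟩ := h.rep hK hf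
  exact ⟨hf, y, hy⟩

theorem Dom.nrm_le (hK : Measurable (Function.uncurry K)) {f : ℝ → ℝ} (hf : AEMeasurable f mu01)
    {x : X} (h : Dom B K f x) : nrmTK B K f ≤ ‖x‖ := by
  obtain ⟨y, hy, hn⟩ := h.rep hK hf
  rw [hy.nrm]; exact hn

theorem memTK.rep {f : ℝ → ℝ} (h : memTK B K f) : ∃ x, Rep B K f x ∧ ‖x‖ = nrmTK B K f := by
  obtain ⟨x, hx⟩ := h.2
  have hx : Rep B K f x := hx
  exact ⟨x, hx, hx.nrm.symm⟩

theorem Dom.mono {f g : ℝ → ℝ} {x : X} (h : Dom B K f x)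
    (hg : ∀ᵐ y ∂mu01, |g y| ≤ |f y|) : Dom B K g x := by
  filter_upwards [h] with s hs
  have h1 := TKabs_mono (K := K) hg s
  exact ⟨ne_top_of_le_ne_top hs.1 h1, (ENNReal.toReal_mono hs.1 h1).trans hs.2⟩

theorem Dom.add (hK : Measurable (Function.uncurry K)) {f g : ℝ → ℝ} (hf : AEMeasurable f mu01)
    {x y : X} (hx : Dom B K f x) (hy : Dom B K g y) : Dom B K (f + g) (x + y) := by
  filter_upwards [hx, hy] with s h1 h2
  have h3 := TKabs_add_le hK (g := g) hf s
  have h4 : TKabs K f s + TKabs K g s ≠ ⊤ := ENNReal.add_ne_top.2 ⟨h1.1, h2.1⟩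
  refine ⟨ne_top_of_le_ne_top h4 h3, (ENNReal.toReal_mono h4 h3).trans ?_⟩
  rw [ENNReal.toReal_add h1.1 h2.1, map_add, Pi.add_apply]
  exact add_le_add h1.2 h2.2

theorem Dom.smul (hK : Measurable (Function.uncurry K)) {f : ℝ → ℝ} (hf : AEMeasurable f mu01)
    {x : X} (c : ℝ) (hx : Dom B K f x) : Dom B K (c • f) (|c| • x) := by
  filter_upwards [hx] with s h1
  rw [TKabs_smul hK hf]
  refine ⟨ENNReal.mul_ne_top ENNReal.ofReal_ne_top h1.1, ?_⟩
  rw [ENNReal.toReal_mul, ENNReal.toReal_ofReal (abs_nonneg _), map_smul, Pi.smul_apply,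
    smul_eq_mul]
  exact mul_le_mul_of_nonneg_left h1.2 (abs_nonneg _)

theorem Rep.smul (hK : Measurable (Function.uncurry K)) {f : ℝ → ℝ} (hf : AEMeasurable f mu01)
    {x : X} (c : ℝ) (hx : Rep B K f x) : Rep B K (c • f) (|c| • x) := by
  filter_upwards [hx] with s h1
  rw [TKabs_smul hK hf]
  refine ⟨ENNReal.mul_ne_top ENNReal.ofReal_ne_top h1.1, ?_⟩
  rw [ENNReal.toReal_mul, ENNReal.toReal_ofReal (abs_nonneg _), map_smul, Pi.smul_apply,
    smul_eq_mul, h1.2]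

theorem rep_zero : Rep B K 0 (0 : X) := by
  refine Eventually.of_forall fun s => ?_
  simp [TKabs]

theorem Dom.sum (hK : Measurable (Function.uncurry K)) {f : ℕ → ℝ → ℝ}
    (hf : ∀ n, AEMeasurable (f n) mu01)
    {x : ℕ → X} (hx : ∀ n, Dom B K (f n) (x n)) (n : ℕ) :
    AEMeasurable (∑ k ∈ Finset.range n, f k) mu01 ∧
    Dom B K (∑ k ∈ Finset.range n, f k) (∑ k ∈ Finset.range n, x k) := by
  induction n with
  | zero => simpa using ⟨aemeasurable_const, rep_zero.dom⟩
  | succ n ih =>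
    rw [Finset.sum_range_succ, Finset.sum_range_succ]
    exact ⟨ih.1.add (hf n), ih.2.add hK ih.1 (hx n)⟩

theorem memTK.mono (hK : Measurable (Function.uncurry K)) {f g : ℝ → ℝ} (h : memTK B K f)
    (hg : AEMeasurable g mu01) (hle : ∀ᵐ y ∂mu01, |g y| ≤ |f y|) :
    memTK B K g ∧ nrmTK B K g ≤ nrmTK B K f := by
  obtain ⟨x, hx, hn⟩ := h.rep
  have := hx.dom.mono hle
  exact ⟨this.mem hK hg, hn ▸ this.nrm_le hK hg⟩

theorem isSNS (hK : Measurable (Function.uncurry K)) : IsSNS (memTK B K) (nrmTK B K) where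
  zero := rep_zero.dom.mem hK aemeasurable_const
  add {f g} hf hg := by
    obtain ⟨x, hx, -⟩ := hf.rep
    obtain ⟨y, hy, -⟩ := hg.rep
    exact (hx.dom.add hK hf.1 hy.dom).mem hK (hf.1.add hg.1)
  smul c f hf := by
    obtain ⟨x, hx, -⟩ := hf.rep
    exact (hx.dom.smul hK hf.1 c).mem hK (hf.1.const_smul c)
  nadd {f g} hf hg := by
    obtain ⟨x, hx, hnx⟩ := hf.rep
    obtain ⟨y, hy, hny⟩ := hg.rep
    rw [← hnx, ← hny]
    exact ((hx.dom.add hK hf.1 hy.dom).nrm_le hK (hf.1.add hg.1)).trans (norm_add_le _ _)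
  nsmul c f hf := by
    obtain ⟨x, hx, hnx⟩ := hf.rep
    rw [(hx.smul hK hf.1 c).nrm, norm_smul, hnx]
    simp
  nonneg {f} hf := by
    obtain ⟨x, hx, hnx⟩ := hf.rep
    rw [← hnx]; exact norm_nonneg _

theorem mem_one (hK : Measurable (Function.uncurry K))
    (hKone : memTK B K ((Set.Icc (0 : ℝ) 1).indicator fun _ => 1)) :
    memTK B K (fun _ => 1) := by
  refine (hKone.mono hK aemeasurable_const ?_).1
  have : ∀ᵐ y ∂mu01, y ∈ Set.Icc (0:ℝ) 1 := ae_restrict_mem measurableSet_Icc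
  filter_upwards [this] with y hy
  simp [hy]

theorem mem_bdd (hK : Measurable (Function.uncurry K)) (h1 : memTK B K (fun _ => 1)) {f : ℝ → ℝ}
    (hf : AEMeasurable f mu01) (M : ℝ) (hM : ∀ᵐ y ∂mu01, |f y| ≤ M) : memTK B K f := by
  refine (((isSNS hK).smul M h1).mono hK hf ?_).1
  filter_upwards [hM] with y hy
  simpa using hy.trans (le_abs_self _)

theorem K_fin (hK : Measurable (Function.uncurry K)) (h1 : memTK B K (fun _ => 1)) :
    ∀ᵐ s ∂mu01, (∀ᵐ y ∂mu01, K s y < ⊤) ∧ Integrable (fun y => (K s y).toReal) mu01 := by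
  obtain ⟨x, hx⟩ := h1.2
  filter_upwards [hx] with s hs
  have h2 : ∫⁻ y, K s y ∂mu01 ≠ ⊤ := by
    have := hs.1
    rw [TKabs_eq] at this
    simpa using this
  exact ⟨ae_lt_top (K_measurable hK s) h2,
    integrable_toReal_of_lintegral_ne_top (K_measurable hK s).aemeasurable h2⟩

/-- dominated convergence in the optimal domain -/
theorem nrm_dct (hac : B.ACNorm) (hK : Measurable (Function.uncurry K))
    (h1 : memTK B K (fun _ => 1)) {F : ℝ → ℝ} (hF : memTK B K F) (f : ℕ → ℝ → ℝ)
    (hf : ∀ n, AEMeasurable (f n) mu01) (hdom : ∀ n, ∀ᵐ y ∂mu01, |f n y| ≤ |F y|)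
    (hlim : ∀ᵐ y ∂mu01, Tendsto (fun n => f n y) atTop (𝓝 0)) :
    Tendsto (fun n => nrmTK B K (f n)) atTop (𝓝 0) := by
  have hm := fun n => (hF.mono hK (hf n) (hdom n)).1
  choose x hx hxn using fun n => (hm n).rep
  obtain ⟨z, hz, -⟩ := hF.rep
  obtain ⟨y, hy, hxy⟩ := hac.dct x z (fun _ => 0)
    (by
      intro n
      filter_upwards [hx n, hz] with s h2 h3
      rw [← h2.2, ← h3.2, abs_of_nonneg ENNReal.toReal_nonneg]
      exact ENNReal.toReal_mono h3.1 (TKabs_mono (hdom n) s))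
    (by
      filter_upwards [ae_all_iff.2 hx, hz, K_fin hK h1] with s h2 h3 h4
      have h5 : Tendsto (fun n => TKabs K (f n) s) atTop (𝓝 (∫⁻ _, 0 ∂mu01)) := by
        simp only [TKabs_eq]
        apply tendsto_lintegral_of_dominated_convergence'
          (fun y => K s y * ENNReal.ofReal |F y|)
        · intro n
          exact (K_measurable hK s).aemeasurable.mul
            (continuous_abs.measurable.comp_aemeasurable (hf n)).ennreal_ofReal
        · intro n
          filter_upwards [hdom n] with y hy
          gcongr
        · exact h3.1
        · filter_upwards [hlim, h4.1] with y hy hy2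
          have e1 : Tendsto (fun n => ENNReal.ofReal |f n y|) atTop (𝓝 0) := by
            have := ENNReal.tendsto_ofReal hy.abs
            simpa using this
          have := ENNReal.Tendsto.const_mul e1 (Or.inr hy2.ne)
          simpa using this
      rw [lintegral_zero] at h5
      have h6 := (ENNReal.tendsto_toReal ENNReal.zero_ne_top).comp h5
      simp only [← (h2 _).2]
      simpa [Function.comp_def] using h6)
  have hy0 : y = 0 := B.eq_zero y hy
  have := hxy.norm
  simp only [hy0, norm_zero, hxn] at this
  exact this

theorem nrm_uac (hac : B.ACNorm) (hK : Measurable (Function.uncurry K))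
    (h1 : memTK B K (fun _ => 1)) {F : ℝ → ℝ} (hF : memTK B K F) (ε : ℝ) (hε : 0 < ε) :
    ∃ δ : ℝ, 0 < δ ∧ ∀ A : Set ℝ, MeasurableSet A → mu01 A < ENNReal.ofReal δ →
      nrmTK B K (A.indicator F) ≤ ε := by
  by_contra hcon
  push Not at hcon
  choose A hA hAm hAn using fun n : ℕ => hcon ((1/2:ℝ) ^ n) (by positivity)
  have hsum : ∑' n, mu01 (A n) ≠ ⊤ := by
    refine ne_top_of_le_ne_top ?_ (ENNReal.tsum_le_tsum fun n => (hAm n).le)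
    rw [← ENNReal.ofReal_tsum_of_nonneg (fun n => by positivity) summable_geometric_two]
    exact ENNReal.ofReal_ne_top
  have hbc := ae_eventually_notMem hsum
  have := nrm_dct hac hK h1 hF (fun n => (A n).indicator F) (fun n => hF.1.indicator (hA n))
    (fun n => Eventually.of_forall fun y => by
      by_cases hy : y ∈ A n <;> simp [hy])
    (by
      filter_upwards [hbc] with y hy
      apply tendsto_const_nhds.congr'
      filter_upwards [hy] with n hn
      simp [hn])
  obtain ⟨n, hn⟩ := (this.eventually_lt_const hε).exists
  exact absurd (hAn n) hn.le.not_gt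

theorem TKabs_toReal (hK : Measurable (Function.uncurry K)) {f : ℝ → ℝ}
    (hf : AEMeasurable f mu01) {s : ℝ} (hs : ∀ᵐ y ∂mu01, K s y < ⊤) :
    (TKabs K f s).toReal = ∫ y, (K s y).toReal * |f y| ∂mu01 := by
  rw [TKabs_eq, ← integral_toReal]
  · simp
  · exact (K_measurable hK s).aemeasurable.mul
      (continuous_abs.measurable.comp_aemeasurable hf).ennreal_ofReal
  · filter_upwards [hs] with y hy
    exact ENNReal.mul_lt_top hy ENNReal.ofReal_lt_top

theorem V_integrable (hK : Measurable (Function.uncurry K)) (h1 : memTK B K (fun _ => 1))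
    {f : ℝ → ℝ} (hf : memTK B K f) :
    ∀ᵐ s ∂mu01, Integrable (fun y => (K s y).toReal * f y) mu01 := by
  obtain ⟨x, hx, -⟩ := hf.rep
  filter_upwards [hx] with s h2
  have hm : AEMeasurable (fun y => K s y * ENNReal.ofReal |f y|) mu01 :=
    (K_measurable hK s).aemeasurable.mul
      (continuous_abs.measurable.comp_aemeasurable hf.1).ennreal_ofReal
  have h4 := integrable_toReal_of_lintegral_ne_top hm h2.1
  refine h4.mono ((K_measurable hK s).ennreal_toReal.aemeasurable.mul hf.1).aestronglyMeasurable ?_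
  refine Eventually.of_forall fun y => ?_
  simp

theorem V_exists (hK : Measurable (Function.uncurry K)) (h1 : memTK B K (fun _ => 1))
    {f : ℝ → ℝ} (hf : memTK B K f) :
    ∃ v : X, (B.J v =ᵐ[mu01] fun s => ∫ y, (K s y).toReal * f y ∂mu01) ∧
      ‖v‖ ≤ nrmTK B K f := by
  obtain ⟨x, hx, hn⟩ := hf.rep
  rw [← hn]
  apply B.ideal
  · have hm : Measurable fun p : ℝ × ℝ => (K p.1 p.2).toReal * hf.1.mk f p.2 :=
      (Measurable.ennreal_toReal hK).mul (hf.1.measurable_mk.comp measurable_snd)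
    have h2 := hm.stronglyMeasurable.integral_prod_right' (ν := mu01)
    refine h2.measurable.aemeasurable.congr (Eventually.of_forall fun s => ?_)
    apply integral_congr_ae
    filter_upwards [hf.1.ae_eq_mk] with y hy
    simp [hy]
  · filter_upwards [hx, K_fin hK h1] with s h2 h3
    rw [← h2.2, abs_of_nonneg ENNReal.toReal_nonneg, TKabs_toReal hK hf.1 h3.1]
    refine (abs_integral_le_integral_abs).trans (le_of_eq ?_)
    congr 1
    funext y
    rw [abs_mul, abs_of_nonneg ENNReal.toReal_nonneg]

theorem V_functional (hK : Measurable (Function.uncurry K)) (h1 : memTK B K (fun _ => 1))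
    (φ : X →L[ℝ] ℝ) : ∃ T, IsBddLinFunctional (memTK B K) (nrmTK B K) T ∧
      ∀ f x, memTK B K f → (∀ᵐ y ∂mu01, 0 ≤ f y) → Rep B K f x → T f = φ x := by
  classical
  let V : (ℝ → ℝ) → X := fun f => if hf : memTK B K f then (V_exists hK h1 hf).choose else 0
  have hV : ∀ f, memTK B K f → (B.J (V f) =ᵐ[mu01] fun s => ∫ y, (K s y).toReal * f y ∂mu01) ∧
      ‖V f‖ ≤ nrmTK B K f := by
    intro f hf
    simp only [V, dif_pos hf]
    exact (V_exists hK h1 hf).choose_spec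
  refine ⟨fun f => φ (V f), ⟨?_, ?_, ⟨‖φ‖, ?_⟩⟩, ?_⟩
  · intro f g hf hg
    show φ (V (f + g)) = φ (V f) + φ (V g)
    rw [← map_add]
    refine congrArg φ (B.ext_ae ?_)
    filter_upwards [(hV f hf).1, (hV g hg).1, (hV _ ((isSNS hK).add hf hg)).1,
      V_integrable hK h1 hf, V_integrable hK h1 hg] with s e1 e2 e3 i1 i2
    rw [map_add, Pi.add_apply, e1, e2, e3, ← integral_add i1 i2]
    congr 1; funext y; simp; ring
  · intro c f hf
    show φ (V (c • f)) = c * φ (V f)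
    rw [← smul_eq_mul, ← map_smul]
    refine congrArg φ (B.ext_ae ?_)
    filter_upwards [(hV f hf).1, (hV _ ((isSNS hK).smul c hf)).1] with s e1 e2
    rw [map_smul, Pi.smul_apply, e1, e2, smul_eq_mul, ← integral_const_mul]
    congr 1; funext y; simp; ring
  · intro f hf
    exact (φ.le_opNorm _).trans (by gcongr; exact (hV f hf).2)
  · intro f x hf hpos hx
    simp only
    congr 1
    apply B.ext_ae
    filter_upwards [(hV f hf).1, hx, K_fin hK h1] with s e1 e2 e3
    rw [e1, ← e2.2, TKabs_toReal hK hf.1 e3.1]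
    apply integral_congr_ae
    filter_upwards [hpos] with y hy
    rw [abs_of_nonneg hy]

/-- multiplying a functional by a bounded function -/
theorem mul_functional (hK : Measurable (Function.uncurry K)) {T : (ℝ → ℝ) → ℝ}
    (hT : IsBddLinFunctional (memTK B K) (nrmTK B K) T) (w : ℝ → ℝ) (hw : AEMeasurable w mu01)
    (hw1 : ∀ y, |w y| ≤ 1) :
    (∀ f, memTK B K f → memTK B K (w * f) ∧ nrmTK B K (w * f) ≤ nrmTK B K f) ∧
    IsBddLinFunctional (memTK B K) (nrmTK B K) (fun f => T (w * f)) := by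
  have hm : ∀ f, memTK B K f → memTK B K (w * f) ∧ nrmTK B K (w * f) ≤ nrmTK B K f := by
    intro f hf
    apply hf.mono hK (hw.mul hf.1)
    refine Eventually.of_forall fun y => ?_
    rw [Pi.mul_apply, abs_mul]
    have := hw1 y
    have := abs_nonneg (f y)
    nlinarith
  refine ⟨hm, ?_, ?_, ?_⟩
  · intro f g hf hg
    simp only [mul_add]
    exact hT.1 _ _ (hm f hf).1 (hm g hg).1
  · intro c f hf
    simp only [mul_smul_comm]
    exact hT.2.1 c _ (hm f hf).1
  · obtain ⟨C, hC⟩ := hT.2.2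
    refine ⟨|C|, fun f hf => ?_⟩
    have h1 := hC _ (hm f hf).1
    have h2 := (hm f hf).2
    have h3 := (isSNS hK).nonneg (hm f hf).1
    calc |T (w * f)| ≤ C * nrmTK B K (w * f) := h1
      _ ≤ |C| * nrmTK B K (w * f) := by gcongr; exact le_abs_self _
      _ ≤ |C| * nrmTK B K f := by gcongr

theorem functional_congr (hK : Measurable (Function.uncurry K)) {T : (ℝ → ℝ) → ℝ}
    (hT : IsBddLinFunctional (memTK B K) (nrmTK B K) T) {f g : ℝ → ℝ} (hf : memTK B K f)
    (hfg : f =ᵐ[mu01] g) (hg : memTK B K g) : T f = T g := by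
  have hd : memTK B K (f + (-1:ℝ) • g) := (isSNS hK).add hf ((isSNS hK).smul _ hg)
  have e := hT.1 _ _ hf ((isSNS hK).smul (-1) hg)
  rw [hT.2.1 _ _ hg] at e
  obtain ⟨C, hC⟩ := hT.2.2
  have h0 : nrmTK B K (f + (-1:ℝ) • g) = 0 := by
    have h2 := ((isSNS (B := B) hK).zero.mono hK hd.1 (by
      filter_upwards [hfg] with y hy
      simp [hy])).2
    have h3 : nrmTK B K (0 : ℝ → ℝ) = 0 := by rw [(rep_zero (B := B) (K := K)).nrm]; simp
    have := (isSNS hK).nonneg hd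
    linarith
  have h4 := hC _ hd
  rw [h0, mul_zero] at h4
  have := abs_nonpos_iff.1 h4
  linarith

/-- compactness -/
theorem compact_diag (hac : B.ACNorm) (hK : Measurable (Function.uncurry K))
    (h1 : memTK B K (fun _ => 1)) (f : ℕ → ℕ → ℝ → ℝ) (hf : ∀ n M, AEMeasurable (f n M) mu01)
    (hb : ∀ n M y, |f n M y| ≤ M) (x : ℕ → ℕ → X) (hx : ∀ n M, Rep B K (f n M) (x n M)) :
    ∃ σ : ℕ → ℕ, StrictMono σ ∧ ∃ u : ℕ → X, ∀ M,
      Tendsto (fun n => x (σ n) M) atTop (𝓝 (u M)) ∧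
      ∀ᵐ s ∂mu01, Tendsto (fun n => B.J (x (σ n) M) s) atTop (𝓝 (B.J (u M) s)) := by
  have hmem : ∀ n M, MemLp (fun y => |f n M y|) ⊤ mu01 := fun n M =>
    memLp_top_of_bound (continuous_abs.measurable.comp_aemeasurable (hf n M)).aestronglyMeasurable
      M (Eventually.of_forall fun y => by simpa using hb n M y)
  let P := (ContinuousLinearMap.mul ℝ ℝ).lpPairing mu01 ⊤ 1
  let φ : ℕ → ℕ → (Lp ℝ 1 mu01 →L[ℝ] ℝ) := fun n M => P ((hmem n M).toLp _)
  have : Fact ((1:ℝ≥0∞) ≠ ⊤) := ⟨ENNReal.one_ne_top⟩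
  have : IsSeparable mu01 := by unfold mu01; infer_instance
  have hφ : ∀ n M, ‖φ n M‖ ≤ ‖P‖ * ((measureUnivNNReal mu01 : ℝ) ^ (⊤:ℝ≥0∞).toReal⁻¹ * M) := by
    intro n M
    refine (P.le_opNorm _).trans ?_
    gcongr
    apply Lp.norm_le_of_ae_bound (Nat.cast_nonneg M)
    filter_upwards [(hmem n M).coeFn_toLp] with y hy
    rw [hy]
    simpa using hb n M y
  obtain ⟨σ, hσ, ψ, hψ⟩ := weakStar_diag φ _ hφ
  refine ⟨σ, hσ, ?_⟩
  suffices H : ∀ M, ∃ u : X, Tendsto (fun n => x (σ n) M) atTop (𝓝 u) ∧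
      ∀ᵐ s ∂mu01, Tendsto (fun n => B.J (x (σ n) M) s) atTop (𝓝 (B.J u s)) by
    choose u hu using H
    exact ⟨u, hu⟩
  intro M
  have hpt : ∀ᵐ s ∂mu01, ∃ l, Tendsto (fun n => B.J (x (σ n) M) s) atTop (𝓝 l) := by
    filter_upwards [ae_all_iff.2 fun n => hx (σ n) M, K_fin hK h1] with s e1 e2
    let q : Lp ℝ 1 mu01 := (memLp_one_iff_integrable.2 e2.2).toLp _
    refine ⟨ψ M q, ?_⟩
    convert hψ M q using 2 with n
    rw [← (e1 n).2, TKabs_toReal hK (hf _ _) e2.1]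
    simp only [φ, P]
    rw [ContinuousLinearMap.lpPairing_eq_integral]
    apply integral_congr_ae
    filter_upwards [(hmem (σ n) M).coeFn_toLp, (memLp_one_iff_integrable.2 e2.2).coeFn_toLp]
      with y h3 h4
    simp only [q, h3, h4, ContinuousLinearMap.mul_apply']
    ring
  classical
  let l : ℝ → ℝ := fun s => if h : ∃ l, Tendsto (fun n => B.J (x (σ n) M) s) atTop (𝓝 l)
    then h.choose else 0
  have hl : ∀ᵐ s ∂mu01, Tendsto (fun n => B.J (x (σ n) M) s) atTop (𝓝 (l s)) := by
    filter_upwards [hpt] with s hs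
    simp only [l, dif_pos hs]
    exact hs.choose_spec
  obtain ⟨z, hz, -⟩ := ((isSNS hK).smul (M:ℝ) h1).rep
  obtain ⟨u, hu, hxu⟩ := hac.dct (fun n => x (σ n) M) z l
    (by
      intro n
      filter_upwards [hx (σ n) M, hz] with s h2 h3
      rw [← h2.2, ← h3.2, abs_of_nonneg ENNReal.toReal_nonneg]
      refine ENNReal.toReal_mono h3.1 (TKabs_mono (Eventually.of_forall fun y => ?_) s)
      simpa using hb (σ n) M y)
    hl
  refine ⟨u, hxu, ?_⟩
  filter_upwards [hl, hu] with s h2 h3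
  rw [h3]; exact h2

end Kernel
section Split

variable {B : BFS ℝ mu01 X} {K : ℝ → ℝ → ℝ≥0∞}

open Classical in
def trv (M : ℕ) (t : ℝ) : ℝ := if |t| ≤ M then t else 0

theorem trv_measurable (M : ℕ) : Measurable (trv M) := by
  classical
  unfold trv
  exact Measurable.ite (measurableSet_le continuous_abs.measurable measurable_const)
    measurable_id measurable_const

theorem trv_le (M : ℕ) (t : ℝ) : |trv M t| ≤ M := by
  unfold trv
  split_ifs with h
  · exact h
  · simp

theorem trv_le_self (M : ℕ) (t : ℝ) : |trv M t| ≤ |t| := by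
  unfold trv
  split_ifs with h
  · exact le_rfl
  · simp

theorem trv_split {M k : ℕ} (h : M ≤ k) (t : ℝ) :
    |trv k t| = |trv M t| + |trv k t - trv M t| := by
  have : (M:ℝ) ≤ k := by exact_mod_cast h
  unfold trv
  split_ifs with h1 h2 h2
  · simp
  · simp
  · linarith
  · simp

theorem trv_mono {M k : ℕ} (h : M ≤ k) (t : ℝ) : |trv M t| ≤ |trv k t| := by
  rw [trv_split h]
  have := abs_nonneg (trv k t - trv M t)
  linarith

def tr (M : ℕ) (f : ℝ → ℝ) : ℝ → ℝ := fun s => trv M (f s)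

theorem tr_aem (M : ℕ) {f : ℝ → ℝ} (hf : AEMeasurable f mu01) : AEMeasurable (tr M f) mu01 :=
  (trv_measurable M).comp_aemeasurable hf

theorem Rep.diff (hK : Measurable (Function.uncurry K)) {f g d : ℝ → ℝ} {x y : X}
    (hg : AEMeasurable g mu01) (h : ∀ᵐ t ∂mu01, |f t| = |g t| + |d t|)
    (hx : Rep B K f x) (hy : Rep B K g y) : Rep B K d (x - y) := by
  filter_upwards [hx, hy] with s e1 e2
  have h1 : TKabs K f s = TKabs K g s + TKabs K d s := by
    rw [TKabs_eq, TKabs_eq, TKabs_eq, ← lintegral_add_left']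
    · apply lintegral_congr_ae
      filter_upwards [h] with t ht
      rw [ht, ENNReal.ofReal_add (abs_nonneg _) (abs_nonneg _), mul_add]
    · exact (K_measurable hK s).aemeasurable.mul
        (continuous_abs.measurable.comp_aemeasurable hg).ennreal_ofReal
  have h2 : TKabs K d s ≠ ⊤ := by
    intro hd
    apply e1.1
    rw [h1, hd]; simp
  refine ⟨h2, ?_⟩
  rw [map_sub, Pi.sub_apply, ← e1.2, ← e2.2, h1, ENNReal.toReal_add e2.1 h2]
  ring

/-- selection step: truncations become uniformly small -/
theorem trunc_select [CompleteSpace X] (hX : B.SSP) (hK : Measurable (Function.uncurry K))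
    (h1 : memTK B K (fun _ => 1)) (f : ℕ → ℝ → ℝ) (hf : ∀ n, memTK B K (f n)) (C : ℝ)
    (hC : ∀ n, nrmTK B K (f n) ≤ C) :
    ∃ σ : ℕ → ℕ, StrictMono σ ∧ ∀ ε : ℝ, 0 < ε → ∃ M : ℕ, ∀ k, M ≤ k →
      nrmTK B K (tr k (f (σ k)) - tr M (f (σ k))) ≤ ε := by
  have hac := hX.acNorm
  have hm : ∀ n M, memTK B K (tr M (f n)) ∧ nrmTK B K (tr M (f n)) ≤ nrmTK B K (f n) := by
    intro n M
    exact (hf n).mono hK (tr_aem M (hf n).1) (Eventually.of_forall fun y => trv_le_self M _)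
  choose x hx hxn using fun n M => (hm n M).1.rep
  obtain ⟨σ, hσ, u, hu⟩ := compact_diag hac hK h1 (fun n M => tr M (f n))
    (fun n M => tr_aem M (hf n).1) (fun n M y => trv_le M _) x hx
  have hxC : ∀ n M, ‖x n M‖ ≤ C := fun n M => (hxn n M).trans_le ((hm n M).2.trans (hC n))
  obtain ⟨v, hv⟩ := hX.levi u C
    (fun M => le_of_tendsto' (hu M).1.norm fun n => hxC _ _)
    (fun M => by
      filter_upwards [(hu M).2, ae_all_iff.2 fun n => hx (σ n) M] with s e1 e2
      exact ge_of_tendsto' e1 fun n => by rw [← (e2 n).2]; exact ENNReal.toReal_nonneg)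
    (fun M => by
      filter_upwards [(hu M).2, (hu (M+1)).2, ae_all_iff.2 fun n => hx (σ n) M,
        ae_all_iff.2 fun n => hx (σ n) (M+1)] with s e1 e2 e3 e4
      refine le_of_tendsto_of_tendsto' e1 e2 fun n => ?_
      rw [← (e3 n).2, ← (e4 n).2]
      exact ENNReal.toReal_mono (e4 n).1
        (TKabs_mono (Eventually.of_forall fun y => trv_mono (Nat.le_succ M) _) s))
  have hev : ∀ k : ℕ, ∀ᶠ n in atTop, ∀ M ∈ Set.Iic k, ‖x (σ n) M - u M‖ ≤ 1 / ((k:ℝ) + 1) := by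
    intro k
    rw [eventually_all_finite (Set.finite_Iic k)]
    intro M _
    have := (tendsto_iff_norm_sub_tendsto_zero.1 (hu M).1)
    exact (this.eventually_lt_const (by positivity)).mono fun n hn => hn.le
  obtain ⟨τ, hτ, hτ2⟩ := extraction_forall_of_eventually hev
  refine ⟨σ ∘ τ, hσ.comp hτ, fun ε hε => ?_⟩
  have hcs := hv.cauchySeq
  rw [Metric.cauchySeq_iff'] at hcs
  -- choose M with tails small
  have hcau := Metric.cauchySeq_iff.1 hv.cauchySeq (ε/3) (by positivity)
  obtain ⟨N, hN⟩ := hcau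
  obtain ⟨N2, hN2⟩ := exists_nat_one_div_lt (show 0 < ε/3 by positivity)
  refine ⟨max N N2, fun k hk => ?_⟩
  set M := max N N2
  have hr := Rep.diff hK (tr_aem M (hf (σ (τ k))).1)
    (Eventually.of_forall fun t => trv_split hk (f (σ (τ k)) t)) (hx (σ (τ k)) k) (hx (σ (τ k)) M)
  have hr' : Rep B K (tr k (f ((σ ∘ τ) k)) - tr M (f ((σ ∘ τ) k)))
    (x (σ (τ k)) k - x (σ (τ k)) M) := hr
  rw [hr'.nrm]
  have a1 := hτ2 k k (Set.mem_Iic.2 le_rfl)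
  have a2 := hτ2 k M (Set.mem_Iic.2 hk)
  have a3 := hN k ((le_max_left _ _).trans hk) M (le_max_left _ _)
  rw [dist_eq_norm] at a3
  have a4 : 1 / ((k:ℝ) + 1) ≤ 1 / ((N2:ℝ) + 1) := by
    have : (N2:ℝ) ≤ k := by exact_mod_cast (le_max_right _ _).trans hk
    gcongr
  have : x (σ (τ k)) k - x (σ (τ k)) M =
    (x (σ (τ k)) k - u k) - (x (σ (τ k)) M - u M) + (u k - u M) := by abel
  rw [this]
  have b1 := norm_add_le ((x (σ (τ k)) k - u k) - (x (σ (τ k)) M - u M)) (u k - u M)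
  have b2 := norm_sub_le (x (σ (τ k)) k - u k) (x (σ (τ k)) M - u M)
  linarith

end Split
section Split2

variable {B : BFS ℝ mu01 X} {K : ℝ → ℝ → ℝ≥0∞}

theorem mem_ind (hK : Measurable (Function.uncurry K)) {f : ℝ → ℝ} (hf : memTK B K f)
    {A : Set ℝ} (hA : MeasurableSet A) :
    memTK B K (A.indicator f) ∧ nrmTK B K (A.indicator f) ≤ nrmTK B K f :=
  hf.mono hK (hf.1.indicator hA) (Eventually.of_forall fun y => by
    by_cases hy : y ∈ A <;> simp [hy])

/-- truncations converge -/
theorem tr_tendsto (hac : B.ACNorm) (hK : Measurable (Function.uncurry K))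
    (h1 : memTK B K (fun _ => 1)) {f : ℝ → ℝ} (hf : memTK B K f) :
    Tendsto (fun M => nrmTK B K (f - tr M f)) atTop (𝓝 0) := by
  refine nrm_dct hac hK h1 hf _ (fun M => hf.1.sub (tr_aem M hf.1))
    (fun M => Eventually.of_forall fun y => ?_) (Eventually.of_forall fun y => ?_)
  · simp only [Pi.sub_apply, tr, trv]
    split_ifs <;> simp
  · obtain ⟨N, hN⟩ := exists_nat_ge |f y|
    apply tendsto_const_nhds.congr'
    filter_upwards [eventually_ge_atTop N] with M hM
    have : |f y| ≤ M := hN.trans (by exact_mod_cast hM)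
    simp [tr, trv, this]

theorem nrm_ind_union (hac : B.ACNorm) (hK : Measurable (Function.uncurry K))
    (h1 : memTK B K (fun _ => 1)) (E : ℕ → Set ℝ) (hE : ∀ i, MeasurableSet (E i))
    (hn : ∀ i, nrmTK B K ((E i).indicator fun _ => 1) ≤ (1/2:ℝ)^i) (m : ℕ) :
    nrmTK B K ((⋃ i, ⋃ _ : m ≤ i, E i).indicator fun _ => 1) ≤ 2 * (1/2:ℝ)^m := by
  have hms : ∀ A : Set ℝ, MeasurableSet A → memTK B K (A.indicator fun _ => 1) :=
    fun A hA => (mem_ind hK h1 hA).1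
  set F : Set ℝ := ⋃ i, ⋃ _ : m ≤ i, E i with hF
  have hFm : MeasurableSet F := MeasurableSet.iUnion fun i => MeasurableSet.iUnion fun _ => hE i
  let U : ℕ → Set ℝ := fun n => ⋃ i, ⋃ _ : m ≤ i ∧ i < m + n, E i
  have hUm : ∀ n, MeasurableSet (U n) :=
    fun n => MeasurableSet.iUnion fun i => MeasurableSet.iUnion fun _ => hE i
  have hU : ∀ n, nrmTK B K ((U n).indicator fun _ => 1) ≤ 2 * (1/2:ℝ)^m - 2 * (1/2:ℝ)^(m+n) := by
    intro n
    induction n with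
    | zero =>
      have : ((U 0).indicator fun _ => (1:ℝ)) = 0 := by
        have : U 0 = ∅ := by
          simp only [U, Set.iUnion_eq_empty]
          intro i hi; omega
        rw [this]; simp; rfl
      rw [this, (rep_zero (B := B) (K := K)).nrm]
      simp
    | succ n ih =>
      have h2 := (((isSNS hK).add (hms _ (hUm n)) (hms _ (hE (m+n)))).mono hK
        (hms _ (hUm (n+1))).1 (Eventually.of_forall fun y => by
          by_cases hy : y ∈ U (n+1)
          · have h3 : y ∈ U n ∨ y ∈ E (m+n) := by
              simp only [U, Set.mem_iUnion] at hy ⊢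
              obtain ⟨i, hi, hy⟩ := hy
              by_cases h : i < m + n
              · exact Or.inl ⟨i, ⟨hi.1, h⟩, hy⟩
              · have : i = m + n := by omega
                exact Or.inr (this ▸ hy)
            by_cases h4 : y ∈ U n
            · by_cases h5 : y ∈ E (m+n)
              · simp [hy, h4, h5]; norm_num
              · simp [hy, h4, h5]
            · have h5 := h3.resolve_left h4
              simp [hy, h4, h5]
          · simp only [Set.indicator_of_notMem hy, abs_zero]
            exact abs_nonneg _)).2
      have h3 := (isSNS hK).nadd (hms _ (hUm n)) (hms _ (hE (m+n)))
      have h4 := hn (m+n)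
      have : (1/2:ℝ)^(m+(n+1)) = (1/2)^(m+n) / 2 := by rw [← add_assoc, pow_succ]; ring
      rw [this]
      linarith
  have hlim : Tendsto (fun n => nrmTK B K ((F \ U n).indicator fun _ => 1)) atTop (𝓝 0) := by
    refine nrm_dct hac hK h1 h1 _ (fun n => (hms _ (hFm.diff (hUm n))).1)
      (fun n => Eventually.of_forall fun y => ?_) (Eventually.of_forall fun y => ?_)
    · by_cases hy : y ∈ F \ U n
      · rw [Set.indicator_of_mem hy]
      · rw [Set.indicator_of_notMem hy]; simp
    · apply tendsto_const_nhds.congr'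
      by_cases hy : y ∈ F
      · simp only [hF, Set.mem_iUnion] at hy
        obtain ⟨i, hi, hy⟩ := hy
        filter_upwards [eventually_gt_atTop i] with n hn
        rw [Set.indicator_of_notMem]
        rintro ⟨-, h⟩
        apply h
        simp only [U, Set.mem_iUnion]
        exact ⟨i, ⟨hi, by omega⟩, hy⟩
      · refine Eventually.of_forall fun n => ?_
        beta_reduce
        rw [Set.indicator_of_notMem]
        rintro ⟨h, -⟩
        exact hy h
  refine le_of_tendsto' (x := atTop) (f := fun n : ℕ =>
    nrmTK B K (F.indicator fun _ => 1) - nrmTK B K ((F \ U n).indicator fun _ => 1)) ?_ ?_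
  · simpa using hlim.const_sub (nrmTK B K (F.indicator fun _ => 1))
  · intro n
    have h2 := ((isSNS hK).add (hms _ (hUm n)) (hms _ (hFm.diff (hUm n)))).mono hK
        (hms _ hFm).1 (Eventually.of_forall fun y => by
          by_cases hy : y ∈ F
          · by_cases h4 : y ∈ U n <;> simp [hy, h4]
          · simp only [Set.indicator_of_notMem hy, abs_zero]
            exact abs_nonneg _) |>.2
    have h3 := (isSNS hK).nadd (hms _ (hUm n)) (hms _ (hFm.diff (hUm n)))
    have h4 := hU n
    have : 0 < (1/2:ℝ)^(m+n) := by positivity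
    linarith

theorem nrm_ind_tendsto (hac : B.ACNorm) (hK : Measurable (Function.uncurry K))
    (h1 : memTK B K (fun _ => 1)) (F : ℕ → Set ℝ) (hF : ∀ i, MeasurableSet (F i))
    (hn : Tendsto (fun i => nrmTK B K ((F i).indicator fun _ => 1)) atTop (𝓝 0))
    {f : ℝ → ℝ} (hf : memTK B K f) :
    Tendsto (fun i => nrmTK B K ((F i).indicator f)) atTop (𝓝 0) := by
  rw [Metric.tendsto_atTop]
  intro ε hε
  obtain ⟨M, hM⟩ := ((tr_tendsto hac hK h1 hf).eventually_lt_const (half_pos hε)).exists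
  have h2 : Tendsto (fun i => (M:ℝ) * nrmTK B K ((F i).indicator fun _ => 1)) atTop (𝓝 0) := by
    simpa using hn.const_mul (M:ℝ)
  obtain ⟨N, hN⟩ := eventually_atTop.1 (h2.eventually_lt_const (half_pos hε))
  refine ⟨N, fun n hn => ?_⟩
  have hfi := mem_ind hK hf (hF n)
  have h0 := (isSNS hK).nonneg hfi.1
  rw [Real.dist_eq, sub_zero, abs_of_nonneg h0]
  have h1i := mem_ind hK h1 (hF n)
  have ha := (isSNS hK).smul (M:ℝ) h1i.1
  have hd : memTK B K (f - tr M f) := (hf.mono hK (hf.1.sub (tr_aem M hf.1))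
    (Eventually.of_forall fun y => by
      simp only [Pi.sub_apply, tr, trv]
      split_ifs <;> simp)).1
  have hb := mem_ind hK hd (hF n)
  have habs : memTK B K (fun y => |(F n).indicator (f - tr M f) y|) :=
    (hb.1.mono hK (continuous_abs.measurable.comp_aemeasurable hb.1.1)
      (Eventually.of_forall fun y => by simp)).1
  have habs2 : nrmTK B K (fun y => |(F n).indicator (f - tr M f) y|) ≤
      nrmTK B K ((F n).indicator (f - tr M f)) :=
    (hb.1.mono hK (continuous_abs.measurable.comp_aemeasurable hb.1.1)
      (Eventually.of_forall fun y => by simp)).2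
  have h3 := (((isSNS hK).add ha habs).mono hK hfi.1.1 (Eventually.of_forall fun y => by
    by_cases hy : y ∈ F n
    · simp only [Pi.add_apply, Pi.smul_apply, Set.indicator_of_mem hy, Pi.sub_apply, smul_eq_mul,
        mul_one, tr]
      have e1 := trv_le M (f y)
      have e2 := abs_add_le (trv M (f y)) (f y - trv M (f y))
      rw [add_sub_cancel] at e2
      have e3 := le_abs_self ((M:ℝ) + |f y - trv M (f y)|)
      linarith
    · simp [hy])).2
  have h4 := (isSNS hK).nadd ha habs
  rw [(isSNS hK).nsmul _ h1i.1, abs_of_nonneg (Nat.cast_nonneg M)] at h4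
  have h5 := hN n hn
  have h6 := hb.2
  linarith

theorem set_select (hac : B.ACNorm) (hK : Measurable (Function.uncurry K))
    (h1 : memTK B K (fun _ => 1)) (E : ℕ → Set ℝ) (hE : ∀ i, MeasurableSet (E i))
    (hn : Tendsto (fun i => nrmTK B K ((E i).indicator fun _ => 1)) atTop (𝓝 0))
    (f : ℕ → ℝ → ℝ) (hf : ∀ n, memTK B K (f n)) :
    ∃ κ : ℕ → ℕ, StrictMono κ ∧ ∀ j : ℕ,
      nrmTK B K ((⋃ i, ⋃ _ : j < i, E (κ i)).indicator (f (κ j))) ≤ 1 / ((j:ℝ) + 1) := by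
  obtain ⟨σ, hσ, hσ2⟩ := extraction_forall_of_eventually
    (fun i : ℕ => (hn.eventually_lt_const (show 0 < (1/2:ℝ)^i by positivity)))
  let F : ℕ → Set ℝ := fun m => ⋃ i, ⋃ _ : m ≤ i, E (σ i)
  have hFm : ∀ m, MeasurableSet (F m) :=
    fun m => MeasurableSet.iUnion fun i => MeasurableSet.iUnion fun _ => hE _
  have hFn : Tendsto (fun i => nrmTK B K ((F i).indicator fun _ => 1)) atTop (𝓝 0) := by
    refine squeeze_zero (fun i => (isSNS hK).nonneg (mem_ind hK h1 (hFm i)).1)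
      (fun i => nrm_ind_union hac hK h1 (fun i => E (σ i)) (fun i => hE _) (fun i => (hσ2 i).le) i)
      ?_
    simpa using (tendsto_pow_atTop_nhds_zero_of_lt_one (by norm_num : (0:ℝ) ≤ 1/2)
      (by norm_num)).const_mul 2
  have hb : ∀ l : ℕ, ∃ b, l < b ∧ nrmTK B K ((F b).indicator (f (σ l))) < 1 / ((l:ℝ) + 1) := by
    intro l
    have := (nrm_ind_tendsto hac hK h1 F hFm hFn (hf (σ l))).eventually_lt_const
      (show 0 < 1 / ((l:ℝ)+1) by positivity)
    obtain ⟨b, hb⟩ := (this.and (eventually_gt_atTop l)).exists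
    exact ⟨b, hb.2, hb.1⟩
  choose b hb hb2 using hb
  let τ : ℕ → ℕ := fun j => b^[j] 0
  have hτs : ∀ j, τ (j+1) = b (τ j) := fun j => Function.iterate_succ_apply' b j 0
  have hτ : StrictMono τ := strictMono_nat_of_lt_succ fun j => by rw [hτs]; exact hb _
  refine ⟨σ ∘ τ, hσ.comp hτ, fun j => ?_⟩
  have hsub : (⋃ i, ⋃ _ : j < i, E ((σ ∘ τ) i)) ⊆ F (b (τ j)) := by
    intro y hy
    simp only [Set.mem_iUnion, F] at hy ⊢
    obtain ⟨i, hi, hy⟩ := hy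
    refine ⟨τ i, ?_, hy⟩
    rw [← hτs]
    exact hτ.monotone hi
  have h2 := (mem_ind hK (hf (σ (τ j))) (hFm (b (τ j)))).1.mono hK
    (g := (⋃ i, ⋃ _ : j < i, E ((σ ∘ τ) i)).indicator (f ((σ ∘ τ) j)))
    ((hf _).1.indicator (MeasurableSet.iUnion fun i => MeasurableSet.iUnion fun _ => hE _))
    (Eventually.of_forall fun y => by
      by_cases hy : y ∈ ⋃ i, ⋃ _ : j < i, E ((σ ∘ τ) i)
      · rw [Set.indicator_of_mem hy, Set.indicator_of_mem (hsub hy)]; rfl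
      · rw [Set.indicator_of_notMem hy]; simp) |>.2
  refine h2.trans ((hb2 (τ j)).le.trans ?_)
  have : (j:ℝ) ≤ τ j := by exact_mod_cast hτ.le_apply
  gcongr

end Split2
section Split3

variable {B : BFS ℝ mu01 X} {K : ℝ → ℝ → ℝ≥0∞}

theorem nrm_le_add (hK : Measurable (Function.uncurry K)) {f g k : ℝ → ℝ} (hf : memTK B K f)
    (hg : memTK B K g) (hk : AEMeasurable k mu01) (h : ∀ᵐ y ∂mu01, |k y| ≤ |f y| + |g y|) :
    memTK B K k ∧ nrmTK B K k ≤ nrmTK B K f + nrmTK B K g := by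
  have hfa := hf.mono hK (continuous_abs.measurable.comp_aemeasurable hf.1)
      (Eventually.of_forall fun y => by simp)
  have hga := hg.mono hK (continuous_abs.measurable.comp_aemeasurable hg.1)
      (Eventually.of_forall fun y => by simp)
  have h2 := ((isSNS hK).add hfa.1 hga.1).mono hK hk (by
    filter_upwards [h] with y hy
    exact hy.trans (le_abs_self _))
  refine ⟨h2.1, h2.2.trans (((isSNS hK).nadd hfa.1 hga.1).trans ?_)⟩
  linarith [hfa.2, hga.2]

theorem mem_sub_tr (hK : Measurable (Function.uncurry K)) {f : ℝ → ℝ} (hf : memTK B K f)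
    (M : ℕ) : memTK B K (f - tr M f) :=
  (hf.mono hK (hf.1.sub (tr_aem M hf.1)) (Eventually.of_forall fun y => by
      simp only [Pi.sub_apply, tr, trv]
      split_ifs <;> simp)).1

theorem mem_tr (hK : Measurable (Function.uncurry K)) {f : ℝ → ℝ} (hf : memTK B K f)
    (M : ℕ) : memTK B K (tr M f) :=
  (hf.mono hK (tr_aem M hf.1) (Eventually.of_forall fun y => trv_le_self M _)).1

theorem uac_of_tr (hac : B.ACNorm) (hK : Measurable (Function.uncurry K))
    (h1 : memTK B K (fun _ => 1)) (g : ℕ → ℝ → ℝ) (hg : ∀ n, memTK B K (g n))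
    (h : ∀ ε : ℝ, 0 < ε → ∃ M : ℕ, ∀ n, nrmTK B K (g n - tr M (g n)) ≤ ε) :
    UnifACNorm mu01 (nrmTK B K) (Set.range g) := by
  intro ε hε
  obtain ⟨M, hM⟩ := h (ε/2) (half_pos hε)
  obtain ⟨δ, hδ, hδ2⟩ := nrm_uac hac hK h1 ((isSNS hK).smul (M:ℝ) h1) (ε/2) (half_pos hε)
  refine ⟨δ, hδ, fun A hA hAδ f hf => ?_⟩
  obtain ⟨n, rfl⟩ := hf
  have h2 := (nrm_le_add hK (mem_ind hK ((isSNS hK).smul (M:ℝ) h1) hA).1 (mem_sub_tr hK (hg n) M)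
    ((hg n).1.indicator hA) (Eventually.of_forall fun y => by
      by_cases hy : y ∈ A
      · simp only [Set.indicator_of_mem hy, Pi.smul_apply, Pi.sub_apply, tr, smul_eq_mul, mul_one]
        have e1 := trv_le M (g n y)
        have e2 := abs_add_le (trv M (g n y)) (g n y - trv M (g n y))
        rw [add_sub_cancel] at e2
        have := le_abs_self (M:ℝ)
        linarith
      · simp only [Set.indicator_of_notMem hy, abs_zero]
        positivity)).2
  linarith [hδ2 A hA hAδ, hM n]

theorem ssp_meas [CompleteSpace X] (hX : B.SSP) (hK : Measurable (Function.uncurry K))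
    (h1 : memTK B K (fun _ => 1)) (f : ℕ → ℝ → ℝ) (hf : ∀ n, memTK B K (f n))
    (hfm : ∀ n, Measurable (f n)) (C : ℝ) (hC : ∀ n, nrmTK B K (f n) ≤ C) :
    ∃ σ : ℕ → ℕ, StrictMono σ ∧ ∃ g h : ℕ → ℝ → ℝ,
      (∀ n, memTK B K (g n)) ∧ (∀ n, memTK B K (h n)) ∧ (∀ n, f (σ n) = g n + h n) ∧
      (∀ n s, g n s * h n s = 0) ∧ (∀ i j, i ≠ j → ∀ s, h i s * h j s = 0) ∧
      ∀ ε : ℝ, 0 < ε → ∃ M : ℕ, ∀ n, nrmTK B K (g n - tr M (g n)) ≤ ε := by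
  have hac := hX.acNorm
  obtain ⟨σ, hσ, hσ2⟩ := trunc_select hX hK h1 f hf C hC
  let E : ℕ → Set ℝ := fun k => {y | (k:ℝ) < |f (σ k) y|}
  have hE : ∀ k, MeasurableSet (E k) := fun k =>
    measurableSet_lt measurable_const (continuous_abs.measurable.comp (hfm _))
  have hEn : Tendsto (fun i => nrmTK B K ((E i).indicator fun _ => 1)) atTop (𝓝 0) := by
    refine squeeze_zero' (g := fun k : ℕ => C / k)
      (Eventually.of_forall fun i => (isSNS hK).nonneg (mem_ind hK h1 (hE i)).1) ?_
      (tendsto_const_div_atTop_nhds_zero_nat C)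
    filter_upwards [eventually_gt_atTop 0] with k hk
    have hk' : (0:ℝ) < k := by exact_mod_cast hk
    rw [le_div_iff₀ hk']
    have h2 := (isSNS hK).smul (k:ℝ) (mem_ind hK h1 (hE k)).1
    have h3 := ((hf (σ k)).mono hK h2.1 (Eventually.of_forall fun y => by
      by_cases hy : y ∈ E k
      · simp only [Pi.smul_apply, Set.indicator_of_mem hy, smul_eq_mul, mul_one, Nat.abs_cast]
        exact le_of_lt hy
      · simp [hy])).2
    rw [(isSNS hK).nsmul _ (mem_ind hK h1 (hE k)).1, Nat.abs_cast] at h3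
    linarith [hC (σ k)]
  obtain ⟨κ, hκ, hκ2⟩ := set_select hac hK h1 E hE hEn (fun k => f (σ k)) (fun k => hf _)
  let G : ℕ → Set ℝ := fun j => ⋃ i, ⋃ _ : j < i, E (κ i)
  have hG : ∀ j, MeasurableSet (G j) :=
    fun m => MeasurableSet.iUnion fun i => MeasurableSet.iUnion fun _ => hE _
  let E' : ℕ → Set ℝ := fun j => E (κ j) \ G j
  have hE' : ∀ j, MeasurableSet (E' j) := fun j => (hE _).diff (hG j)
  have hEE : ∀ i j, i < j → ∀ s, s ∈ E' i → s ∈ E' j → False := by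
    intro i j hij s hi hj
    apply hi.2
    simp only [G, Set.mem_iUnion]
    exact ⟨j, hij, hj.1⟩
  let g : ℕ → ℝ → ℝ := fun j => (E' j)ᶜ.indicator (f (σ (κ j)))
  let h : ℕ → ℝ → ℝ := fun j => (E' j).indicator (f (σ (κ j)))
  have hg : ∀ n, memTK B K (g n) := fun n => (mem_ind hK (hf _) (hE' n).compl).1
  have hh : ∀ n, memTK B K (h n) := fun n => (mem_ind hK (hf _) (hE' n)).1
  refine ⟨σ ∘ κ, hσ.comp hκ, g, h, hg, hh, ?_, ?_, ?_, ?_⟩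
  · intro n
    exact (Set.indicator_compl_add_self (E' n) (f (σ (κ n)))).symm
  · intro n s
    by_cases hs : s ∈ E' n <;> simp [g, h, hs]
  · intro i j hij s
    by_cases hi : s ∈ E' i
    · by_cases hj : s ∈ E' j
      · rcases lt_or_gt_of_ne hij with hlt | hlt
        · exact (hEE i j hlt s hi hj).elim
        · exact (hEE j i hlt s hj hi).elim
      · simp [h, hj]
    · simp [h, hi]
  · intro ε hε
    obtain ⟨M0, hM0⟩ := hσ2 (ε/2) (half_pos hε)
    obtain ⟨N, hN⟩ := exists_nat_one_div_lt (half_pos hε)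
    have hfin : ∀ᶠ M in atTop, ∀ j ∈ Set.Iio (max M0 N), nrmTK B K (g j - tr M (g j)) < ε := by
      rw [eventually_all_finite (Set.finite_Iio _)]
      intro j _
      exact (tr_tendsto hac hK h1 (hg j)).eventually_lt_const hε
    obtain ⟨M, hM, hMM⟩ := (hfin.and (eventually_ge_atTop M0)).exists
    refine ⟨M, fun j => ?_⟩
    by_cases hj : j < max M0 N
    · exact (hM j hj).le
    · push Not at hj
      have hM0j : M0 ≤ κ j := ((le_max_left _ _).trans hj).trans hκ.le_apply
      have hmd : memTK B K (tr (κ j) (f (σ (κ j))) - tr M0 (f (σ (κ j)))) := by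
        have := (isSNS hK).add (mem_tr hK (hf (σ (κ j))) (κ j))
          ((isSNS hK).smul (-1) (mem_tr hK (hf (σ (κ j))) M0))
        rwa [neg_one_smul, ← sub_eq_add_neg] at this
      have h2 := (nrm_le_add hK hmd (mem_ind hK (hf (σ (κ j))) (hG j)).1
        (mem_sub_tr hK (hg j) M).1 (Eventually.of_forall fun y => by
          have hself : ∀ (M : ℕ) (t : ℝ), |t - trv M t| ≤ |t| := by
            intro M t
            unfold trv
            split_ifs <;> simp
          by_cases hy : y ∈ E' j
          · have : g j y = 0 := by simp [g, hy]
            simp only [Pi.sub_apply, tr, this]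
            refine le_trans ?_ (add_nonneg (abs_nonneg _) (abs_nonneg _))
            simp [trv]
          · have hgy : g j y = f (σ (κ j)) y := by simp [g, hy]
            by_cases hyG : y ∈ G j
            · simp only [Pi.sub_apply, tr, hgy, Set.indicator_of_mem hyG]
              exact (hself _ _).trans (le_add_of_nonneg_left (abs_nonneg _))
            · have hyE : y ∉ E (κ j) := fun hyE => hy ⟨hyE, hyG⟩
              have hle : |f (σ (κ j)) y| ≤ κ j := not_lt.1 hyE
              simp only [Pi.sub_apply, tr, hgy, Set.indicator_of_notMem hyG, abs_zero, add_zero]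
              have e1 : trv (κ j) (f (σ (κ j)) y) = f (σ (κ j)) y := by
                unfold trv; rw [if_pos hle]
              rw [e1]
              have hcast : (M0:ℝ) ≤ M := by exact_mod_cast hMM
              unfold trv
              split_ifs with a b
              · simp
              · simp
              · linarith
              · exact le_rfl)).2
      have h3 := hM0 (κ j) hM0j
      have h4 := hκ2 j
      have h5 : 1 / ((j:ℝ) + 1) ≤ 1 / ((N:ℝ) + 1) := by
        have : (N:ℝ) ≤ j := by exact_mod_cast (le_max_right _ _).trans hj
        gcongr
      have h4' : nrmTK B K ((G j).indicator (f (σ (κ j)))) ≤ 1 / ((j:ℝ) + 1) := h4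
      linarith

theorem ssp_strong [CompleteSpace X] (hX : B.SSP) (hK : Measurable (Function.uncurry K))
    (h1 : memTK B K (fun _ => 1)) (f : ℕ → ℝ → ℝ) (hf : ∀ n, memTK B K (f n))
    (C : ℝ) (hC : ∀ n, nrmTK B K (f n) ≤ C) :
    ∃ σ : ℕ → ℕ, StrictMono σ ∧ ∃ g h : ℕ → ℝ → ℝ,
      (∀ n, memTK B K (g n)) ∧ (∀ n, memTK B K (h n)) ∧ (∀ n, f (σ n) = g n + h n) ∧
      (∀ n, (fun s => g n s * h n s) =ᵐ[mu01] 0) ∧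
      (∀ i j, i ≠ j → (fun s => h i s * h j s) =ᵐ[mu01] 0) ∧
      ∀ ε : ℝ, 0 < ε → ∃ M : ℕ, ∀ n, nrmTK B K (g n - tr M (g n)) ≤ ε := by
  let F : ℕ → ℝ → ℝ := fun n => (hf n).1.mk (f n)
  have hFae : ∀ n, f n =ᵐ[mu01] F n := fun n => (hf n).1.ae_eq_mk
  have hF := fun n => (hf n).mono hK (hf n).1.measurable_mk.aemeasurable
    ((hFae n).mono fun y hy => by rw [hy])
  obtain ⟨σ, hσ, g, h, hg, hh, e1, e2, e3, e4⟩ := ssp_meas hX hK h1 F (fun n => (hF n).1)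
    (fun n => (hf n).1.measurable_mk) C (fun n => (hF n).2.trans (hC n))
  let g' : ℕ → ℝ → ℝ := fun n => f (σ n) - h n
  have hg' : ∀ n, g' n =ᵐ[mu01] g n := by
    intro n
    filter_upwards [hFae (σ n)] with y hy
    simp only [g', Pi.sub_apply, hy, e1, Pi.add_apply]
    ring
  have hg'm : ∀ n, memTK B K (g' n) := fun n =>
    ((hg n).mono hK (g := g' n) ((hf _).1.sub (hh n).1) ((hg' n).mono fun y hy => by rw [hy])).1
  refine ⟨σ, hσ, g', h, hg'm, hh, fun n => by simp [g'], ?_, ?_, ?_⟩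
  · intro n
    filter_upwards [hg' n] with y hy
    rw [hy, e2]; rfl
  · intro i j hij
    exact Eventually.of_forall fun s => e3 i j hij s
  · intro ε hε
    obtain ⟨M, hM⟩ := e4 ε hε
    refine ⟨M, fun n => ((mem_sub_tr hK (hg n) M).mono hK (mem_sub_tr hK (hg'm n) M).1 ?_).2.trans
      (hM n)⟩
    filter_upwards [hg' n] with y hy
    simp [tr, hy]

theorem hasSSP [CompleteSpace X] (hX : B.SSP) (hK : Measurable (Function.uncurry K))
    (h1 : memTK B K (fun _ => 1)) : HasSSP mu01 (memTK B K) (nrmTK B K) := by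
  rintro f hf ⟨C, hC⟩
  obtain ⟨σ, hσ, g, h, hg, hh, e1, e2, e3, e4⟩ := ssp_strong hX hK h1 f hf C hC
  exact ⟨σ, hσ, g, h, hg, hh, e1, e2, uac_of_tr hX.acNorm hK h1 g hg e4, e3⟩

end Split3
section WBS

variable {B : BFS ℝ mu01 X} {K : ℝ → ℝ → ℝ≥0∞}

theorem IsSNS.sum {mem : (S → ℝ) → Prop} {nrm : (S → ℝ) → ℝ} (h : IsSNS mem nrm)
    (f : ℕ → S → ℝ) (hf : ∀ n, mem (f n)) (n : ℕ) : mem (∑ k ∈ Finset.range n, f k) := by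
  induction n with
  | zero => simpa using h.zero
  | succ n ih => rw [Finset.sum_range_succ]; exact h.add ih (hf n)

theorem IsSNS.nzero {mem : (S → ℝ) → Prop} {nrm : (S → ℝ) → ℝ} (h : IsSNS mem nrm) :
    nrm 0 = 0 := by
  have := h.nsmul 0 h.zero
  simpa using this

theorem IsSNS.avg_le {mem : (S → ℝ) → Prop} {nrm : (S → ℝ) → ℝ} (h : IsSNS mem nrm)
    (f : ℕ → S → ℝ) (hf : ∀ n, mem (f n)) (ε : ℝ) (hε : 0 ≤ ε) (hfn : ∀ n, nrm (f n) ≤ ε) (n : ℕ) :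
    nrm ((n:ℝ)⁻¹ • ∑ k ∈ Finset.range n, f k) ≤ ε := by
  have h2 : nrm (∑ k ∈ Finset.range n, f k) ≤ n * ε := by
    induction n with
    | zero => simp [h.nzero]
    | succ n ih =>
      rw [Finset.sum_range_succ]
      have := h.nadd (h.sum f hf n) (hf n)
      have := hfn n
      push_cast
      linarith
  rw [h.nsmul _ (h.sum f hf n), abs_of_nonneg (by positivity)]
  rcases Nat.eq_zero_or_pos n with rfl | hn
  · simpa using hε
  · have hn' : (0:ℝ) < n := by exact_mod_cast hn
    rw [inv_mul_le_iff₀ hn']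
    exact h2

theorem functional_avg {mem : (S → ℝ) → Prop} {nrm : (S → ℝ) → ℝ} (h : IsSNS mem nrm)
    {T : (S → ℝ) → ℝ} (hT : IsBddLinFunctional mem nrm T)
    (f : ℕ → S → ℝ) (hf : ∀ n, mem (f n)) (n : ℕ) :
    T ((n:ℝ)⁻¹ • ∑ k ∈ Finset.range n, f k) = (n:ℝ)⁻¹ * ∑ k ∈ Finset.range n, T (f k) := by
  rw [hT.2.1 _ _ (h.sum f hf n)]
  congr 1
  induction n with
  | zero =>
    have := hT.2.1 0 _ h.zero
    simpa using this
  | succ n ih =>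
    rw [Finset.sum_range_succ, Finset.sum_range_succ, hT.1 _ _ (h.sum f hf n) (hf n), ih]

theorem h_weak (hK : Measurable (Function.uncurry K)) (f g h : ℕ → ℝ → ℝ)
    (hf : ∀ n, memTK B K (f n)) (hg : ∀ n, memTK B K (g n)) (hh : ∀ n, memTK B K (h n))
    (hfgh : ∀ n, f n = g n + h n)
    (huac : UnifACNorm mu01 (nrmTK B K) (Set.range g))
    (hdis : ∀ i j, i ≠ j → (fun s => h i s * h j s) =ᵐ[mu01] 0)
    (hw : WeaklyNullSeq (memTK B K) (nrmTK B K) f) :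
    WeaklyNullSeq (memTK B K) (nrmTK B K) h := by
  intro T hT
  let m : ℕ → ℝ → ℝ := fun n => (hh n).1.mk (h n)
  have hm : ∀ n, h n =ᵐ[mu01] m n := fun n => (hh n).1.ae_eq_mk
  let E : ℕ → Set ℝ := fun j => {s | m j s ≠ 0}
  have hE : ∀ j, MeasurableSet (E j) := fun j =>
    (measurableSet_eq_fun (hh j).1.measurable_mk measurable_const).compl
  have hEd : Pairwise (Function.onFun (AEDisjoint mu01) E) := by
    intro i j hij
    change mu01 (E i ∩ E j) = 0
    have : ∀ᵐ s ∂mu01, s ∉ E i ∩ E j := by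
      filter_upwards [hdis i j hij, hm i, hm j] with s e1 e2 e3
      rintro ⟨a, b⟩
      rw [e2, e3] at e1
      exact (mul_ne_zero a b) e1
    simpa [ae_iff] using this
  have hsum : ∑' j, mu01 (E j) ≠ ⊤ := by
    rw [← measure_iUnion₀ hEd (fun j => (hE j).nullMeasurableSet)]
    exact measure_ne_top _ _
  let P : ℕ → Set ℝ := fun N => ⋃ j, E (j + N)
  have hP : ∀ N, MeasurableSet (P N) := fun N => MeasurableSet.iUnion fun j => hE _
  have hP0 : Tendsto (fun N => mu01 (P N)) atTop (𝓝 0) :=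
    tendsto_of_tendsto_of_tendsto_of_le_of_le tendsto_const_nhds
      (ENNReal.tendsto_sum_nat_add _ hsum) (fun _ => bot_le) (fun N => measure_iUnion_le _)
  obtain ⟨C, hC⟩ := hT.2.2
  rw [Metric.tendsto_atTop]
  intro ε hε
  obtain ⟨δ, hδ, hδ2⟩ := huac (ε / (2 * (|C| + 1))) (by positivity)
  obtain ⟨N, hN⟩ := (hP0.eventually_lt_const (ENNReal.ofReal_pos.2 hδ)).exists
  let w : ℝ → ℝ := (P N).indicator fun _ => 1
  have hwm : AEMeasurable w mu01 := aemeasurable_const.indicator (hP N)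
  have hwf : ∀ f : ℝ → ℝ, w * f = (P N).indicator f := by
    intro f
    funext s
    by_cases hs : s ∈ P N <;> simp [w, hs]
  have hmul := mul_functional hK hT w hwm (fun y => by
    by_cases hs : y ∈ P N <;> simp [w, hs])
  have h0 := hw _ hmul.2
  obtain ⟨N2, hN2⟩ := eventually_atTop.1
    ((tendsto_zero_iff_abs_tendsto_zero _).1 h0 |>.eventually_lt_const (half_pos hε))
  refine ⟨max N N2, fun n hn => ?_⟩
  rw [Real.dist_eq, sub_zero]
  have hnN : N ≤ n := (le_max_left _ _).trans hn
  have a1 : |T (w * f n)| < ε / 2 := hN2 n ((le_max_right _ _).trans hn)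
  have a2 : T (w * f n) = T (w * g n) + T (w * h n) := by
    rw [hfgh, mul_add]
    exact hT.1 _ _ (hmul.1 _ (hg n)).1 (hmul.1 _ (hh n)).1
  have a3 : T (w * h n) = T (h n) := by
    refine functional_congr hK hT (hmul.1 _ (hh n)).1 ?_ (hh n)
    filter_upwards [hm n] with s e1
    rw [hwf]
    by_cases hs : s ∈ P N
    · simp [hs]
    · rw [Set.indicator_of_notMem hs, e1]
      by_contra hne
      apply hs
      simp only [P, Set.mem_iUnion]
      refine ⟨n - N, ?_⟩
      rw [Nat.sub_add_cancel hnN]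
      exact fun h => hne h.symm
  have a4 : |T (w * g n)| ≤ ε / 2 := by
    have b1 := hC _ (hmul.1 _ (hg n)).1
    have b2 := hδ2 (P N) (hP N) hN (g n) ⟨n, rfl⟩
    rw [← hwf] at b2
    have b3 := (isSNS hK).nonneg (hmul.1 _ (hg n)).1
    calc |T (w * g n)| ≤ C * nrmTK B K (w * g n) := b1
      _ ≤ (|C| + 1) * nrmTK B K (w * g n) := by
          gcongr; linarith [le_abs_self C]
      _ ≤ (|C| + 1) * (ε / (2 * (|C| + 1))) := by gcongr
      _ = ε / 2 := by field_simp
  have a5 : T (h n) = T (w * f n) - T (w * g n) := by rw [a2, a3]; ring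
  rw [a5]
  have := abs_sub (T (w * f n)) (T (w * g n))
  linarith

theorem Rep.congr_abs {f g : ℝ → ℝ} {x : X} (h : Rep B K f x)
    (hfg : ∀ᵐ y ∂mu01, |g y| = |f y|) : Rep B K g x := by
  filter_upwards [h] with s hs
  have : TKabs K g s = TKabs K f s :=
    le_antisymm (TKabs_mono (hfg.mono fun y hy => hy.le) s)
      (TKabs_mono (hfg.mono fun y hy => hy.ge) s)
  rw [this]
  exact hs

theorem h_rep_weak (hK : Measurable (Function.uncurry K)) (h1 : memTK B K (fun _ => 1))
    (h : ℕ → ℝ → ℝ) (hh : ∀ n, memTK B K (h n))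
    (hdis : ∀ i j, i ≠ j → (fun s => h i s * h j s) =ᵐ[mu01] 0)
    (hw : WeaklyNullSeq (memTK B K) (nrmTK B K) h) (x : ℕ → X) (hx : ∀ n, Rep B K (h n) (x n))
    (φ : X →L[ℝ] ℝ) : Tendsto (fun n => φ (x n)) atTop (𝓝 0) := by
  classical
  let m : ℕ → ℝ → ℝ := fun n => (hh n).1.mk (h n)
  have hm : ∀ n, h n =ᵐ[mu01] m n := fun n => (hh n).1.ae_eq_mk
  obtain ⟨T, hT, hTφ⟩ := V_functional hK h1 φ
  let P : Set ℝ := ⋃ j, {s | 0 < m j s}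
  let Q : Set ℝ := ⋃ j, {s | m j s < 0}
  have hP : MeasurableSet P := MeasurableSet.iUnion fun j =>
    measurableSet_lt measurable_const (hh j).1.measurable_mk
  have hQ : MeasurableSet Q := MeasurableSet.iUnion fun j =>
    measurableSet_lt (hh j).1.measurable_mk measurable_const
  let w : ℝ → ℝ := fun s => if s ∈ P then 1 else if s ∈ Q then -1 else 0
  have hwm : Measurable w := Measurable.ite hP measurable_const
    (Measurable.ite hQ measurable_const measurable_const)
  have hmul := mul_functional hK hT w hwm.aemeasurable (fun y => by
    simp only [w]; split_ifs <;> simp)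
  have hwh : ∀ n, ∀ᵐ s ∂mu01, (w * h n) s = |h n s| := by
    intro n
    have hd : ∀ᵐ s ∂mu01, ∀ j, j ≠ n → h j s * h n s = 0 := by
      rw [ae_all_iff]
      intro j
      by_cases hj : j = n
      · exact Eventually.of_forall fun s hs => absurd hj hs
      · filter_upwards [hdis j n hj] with s hs _
        exact hs
    filter_upwards [hd, ae_all_iff.2 hm] with s e1 e2
    simp only [Pi.mul_apply, w, P, Q, Set.mem_iUnion, Set.mem_setOf_eq]
    rcases lt_trichotomy (h n s) 0 with hlt | heq | hgt
    · have hp : ¬ ∃ j, 0 < m j s := by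
        rintro ⟨j, hj⟩
        rw [← e2] at hj
        have hjn : j ≠ n := by rintro rfl; linarith
        exact (mul_ne_zero hj.ne' hlt.ne) (e1 j hjn)
      have hq : ∃ j, m j s < 0 := ⟨n, by rw [← e2]; exact hlt⟩
      rw [if_neg hp, if_pos hq, abs_of_neg hlt]; ring
    · rw [heq]; simp
    · have hp : ∃ j, 0 < m j s := ⟨n, by rw [← e2]; exact hgt⟩
      rw [if_pos hp, abs_of_pos hgt]; ring
  have h0 := hw _ hmul.2
  refine h0.congr fun n => ?_
  refine hTφ _ _ (hmul.1 _ (hh n)).1 ?_ ((hx n).congr_abs ?_)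
  · filter_upwards [hwh n] with s hs
    rw [hs]; exact abs_nonneg _
  · filter_upwards [hwh n] with s hs
    rw [hs, abs_abs]

theorem L2_to_nrm (hac : B.ACNorm) (hK : Measurable (Function.uncurry K))
    (h1 : memTK B K (fun _ => 1)) (u : ℕ → Lp ℝ 2 mu01) (G : Lp ℝ 2 mu01) (v : ℕ → ℝ → ℝ) (M : ℝ)
    (hv : ∀ n, u n =ᵐ[mu01] v n) (hvM : ∀ n, ∀ᵐ y ∂mu01, |v n y| ≤ M)
    (hu : Tendsto u atTop (𝓝 G)) :
    memTK B K G ∧ Tendsto (fun n => nrmTK B K (v n - G)) atTop (𝓝 0) := by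
  have hGm : AEMeasurable (G : ℝ → ℝ) mu01 := (Lp.aestronglyMeasurable G).aemeasurable
  have hvm : ∀ n, AEMeasurable (v n) mu01 :=
    fun n => (Lp.aestronglyMeasurable (u n)).aemeasurable.congr (hv n)
  have key : ∀ ns : ℕ → ℕ, Tendsto ns atTop atTop → ∃ ms : ℕ → ℕ, StrictMono ms ∧
      ∀ᵐ y ∂mu01, Tendsto (fun n => v (ns (ms n)) y) atTop (𝓝 (G y)) := by
    intro ns hns
    obtain ⟨ms, hms, hms2⟩ := (tendstoInMeasure_of_tendsto_Lp (hu.comp hns)).exists_seq_tendsto_ae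
    refine ⟨ms, hms, ?_⟩
    filter_upwards [hms2, ae_all_iff.2 hv] with y e1 e2
    simpa [Function.comp_def, e2] using e1
  have hGM : ∀ᵐ y ∂mu01, |(G : ℝ → ℝ) y| ≤ M := by
    obtain ⟨ms, -, hms⟩ := key id tendsto_id
    filter_upwards [hms, ae_all_iff.2 hvM] with y e1 e2
    exact le_of_tendsto' e1.abs fun n => e2 _
  refine ⟨mem_bdd hK h1 hGm M hGM, ?_⟩
  refine tendsto_of_subseq_tendsto fun ns hns => ?_
  obtain ⟨ms, -, hms⟩ := key ns hns
  refine ⟨ms, nrm_dct hac hK h1 ((isSNS hK).smul (2 * M) h1) _ (fun n => (hvm _).sub hGm) ?_ ?_⟩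
  · intro n
    filter_upwards [hGM, hvM (ns (ms n))] with y e1 e2
    simp only [Pi.sub_apply, Pi.smul_apply, smul_eq_mul, mul_one]
    have := abs_sub (v (ns (ms n)) y) (G y)
    have := le_abs_self (2 * M)
    linarith
  · filter_upwards [hms] with y e1
    have := e1.sub_const (G y)
    simpa using this

end WBS
section Final

variable {B : BFS ℝ mu01 X} {K : ℝ → ℝ → ℝ≥0∞}

theorem memLp_tr {g : ℝ → ℝ} (hg : AEMeasurable g mu01) (M : ℕ) : MemLp (tr M g) 2 mu01 :=
  MemLp.of_bound (tr_aem M hg).aestronglyMeasurable M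
    (Eventually.of_forall fun y => trv_le M (g y))

theorem coe_sum_lp (a : ℕ → Lp ℝ 2 mu01) (v : ℕ → ℝ → ℝ) (h : ∀ n, a n =ᵐ[mu01] v n) (n : ℕ) :
    (∑ k ∈ Finset.range n, a k : Lp ℝ 2 mu01) =ᵐ[mu01] ∑ k ∈ Finset.range n, v k := by
  induction n with
  | zero => simpa using Lp.coeFn_zero ℝ 2 mu01
  | succ n ih =>
    rw [Finset.sum_range_succ, Finset.sum_range_succ]
    exact (Lp.coeFn_add _ _).trans (ih.add (h n))

theorem g_cesaro (hac : B.ACNorm) (hK : Measurable (Function.uncurry K))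
    (h1 : memTK B K (fun _ => 1)) (g : ℕ → ℝ → ℝ) (hg : ∀ n, memTK B K (g n))
    (hw : WeaklyNullSeq (memTK B K) (nrmTK B K) g)
    (htr : ∀ ε : ℝ, 0 < ε → ∃ M : ℕ, ∀ n, nrmTK B K (g n - tr M (g n)) ≤ ε) :
    ∃ τ : ℕ → ℕ, StrictMono τ ∧ ∀ ρ : ℕ → ℕ, StrictMono ρ →
      Tendsto (fun n : ℕ => nrmTK B K ((n:ℝ)⁻¹ • ∑ k ∈ Finset.range n, g (τ (ρ k)))) atTop
        (𝓝 0) := by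
  let a : ℕ → ℕ → Lp ℝ 2 mu01 := fun n M => (memLp_tr (hg n).1 M).toLp _
  have ha : ∀ n M, a n M =ᵐ[mu01] tr M (g n) := fun n M => MemLp.coeFn_toLp _
  obtain ⟨C, hC⟩ : ∃ C : ℕ → ℝ, ∀ n M, ‖a n M‖ ≤ C M := by
    refine ⟨fun M => (measureUnivNNReal mu01 : ℝ) ^ (2:ℝ≥0∞).toReal⁻¹ * M, fun n M => ?_⟩
    apply Lp.norm_le_of_ae_bound (Nat.cast_nonneg M)
    filter_upwards [ha n M] with y hy
    rw [hy]
    exact trv_le M _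
  have : Fact ((2:ℝ≥0∞) ≠ ⊤) := ⟨by simp⟩
  have : IsSeparable mu01 := by unfold mu01; infer_instance
  obtain ⟨σ, hσ, ψ, hψ⟩ := weakStar_diag (fun n M => innerSL ℝ (a n M)) C
    (fun n M => by rw [innerSL_apply_norm]; exact hC n M)
  let G : ℕ → Lp ℝ 2 mu01 := fun M => (InnerProductSpace.toDual ℝ (Lp ℝ 2 mu01)).symm (ψ M)
  have hG : ∀ M v, inner ℝ (G M) v = ψ M v := fun M v =>
    InnerProductSpace.toDual_symm_apply
  let d : ℕ → ℕ → Lp ℝ 2 mu01 := fun n M => a (σ n) M - G M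
  obtain ⟨τ, hτ, hτ2⟩ := hilbert_select d (by
    intro M v
    have h2 := (hψ M v).sub_const (ψ M v)
    rw [sub_self] at h2
    refine h2.congr fun n => ?_
    simp only [d, innerSL_apply_apply]
    rw [inner_sub_right, ← hG M v, real_inner_comm v (a (σ n) M), real_inner_comm v (G M)])
  refine ⟨σ ∘ τ, hσ.comp hτ, fun ρ hρ => ?_⟩
  let κ : ℕ → ℕ := fun k => σ (τ (ρ k))
  have hκ : StrictMono κ := (hσ.comp hτ).comp hρ
  change Tendsto (fun n : ℕ => nrmTK B K ((n:ℝ)⁻¹ • ∑ k ∈ Finset.range n, g (κ k))) atTop (𝓝 0)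
  have hsns := isSNS (B := B) hK
  have hSm : ∀ n : ℕ, memTK B K ((n:ℝ)⁻¹ • ∑ k ∈ Finset.range n, g (κ k)) :=
    fun n => hsns.smul _ (hsns.sum (fun k => g (κ k)) (fun k => hg _) n)
  -- truncated averages
  have hA : ∀ M : ℕ, memTK B K (G M) ∧ Tendsto (fun n : ℕ =>
      nrmTK B K ((n:ℝ)⁻¹ • ∑ k ∈ Finset.range n, tr M (g (κ k)) - G M)) atTop (𝓝 0) := by
    intro M
    have hces := hilbert_cesaro (fun k => d (τ (ρ k)) M) (C M + ‖G M‖)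
      (fun n => (norm_sub_le _ _).trans (by gcongr; exact hC _ _)) M
      (fun i j hij hj => by
        refine (hτ2 (ρ i) (ρ j) (hρ hij) M (hj.trans hρ.le_apply)).trans ?_
        have : (j:ℝ) ≤ ρ j := by exact_mod_cast hρ.le_apply
        gcongr)
    refine L2_to_nrm hac hK h1 (fun n => (n:ℝ)⁻¹ • ∑ k ∈ Finset.range n, a (κ k) M) (G M)
      (fun n => (n:ℝ)⁻¹ • ∑ k ∈ Finset.range n, tr M (g (κ k))) M ?_ ?_ ?_
    · intro n
      refine (Lp.coeFn_smul _ _).trans ?_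
      exact (coe_sum_lp (fun k => a (κ k) M) (fun k => tr M (g (κ k))) (fun k => ha _ _)
        n).const_smul _
    · intro n
      refine Eventually.of_forall fun y => ?_
      simp only [Pi.smul_apply, Finset.sum_apply, smul_eq_mul, abs_mul]
      rw [abs_of_nonneg (by positivity : (0:ℝ) ≤ (n:ℝ)⁻¹)]
      have h3 : |∑ k ∈ Finset.range n, tr M (g (κ k)) y| ≤ n * M := by
        refine (Finset.abs_sum_le_sum_abs _ _).trans ?_
        refine (Finset.sum_le_card_nsmul _ _ (M:ℝ) (fun k _ => trv_le M _)).trans ?_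
        simp
      rcases Nat.eq_zero_or_pos n with rfl | hn
      · simp
      · have hn' : (0:ℝ) < n := by exact_mod_cast hn
        rw [inv_mul_le_iff₀ hn']
        exact h3
    · have h4 := hces.add_const (G M)
      rw [zero_add] at h4
      refine h4.congr' ?_
      filter_upwards [eventually_gt_atTop 0] with n hn
      have hn' : (n:ℝ) ≠ 0 := by exact_mod_cast hn.ne'
      simp only [d, Finset.sum_sub_distrib, Finset.sum_const, Finset.card_range, smul_sub]
      rw [← Nat.cast_smul_eq_nsmul ℝ, smul_smul, inv_mul_cancel₀ hn', one_smul, sub_add_cancel]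
  rw [Metric.tendsto_atTop]
  intro ε hε
  obtain ⟨M, hM⟩ := htr (ε/6) (by positivity)
  obtain ⟨hGm, hGt⟩ := hA M
  have hsubm : ∀ {p q : ℝ → ℝ}, memTK B K p → memTK B K q → memTK B K (p - q) := by
    intro p q hp hq
    have := hsns.add hp (hsns.smul (-1) hq)
    rwa [neg_one_smul, ← sub_eq_add_neg] at this
  have hAm : ∀ n : ℕ, memTK B K ((n:ℝ)⁻¹ • ∑ k ∈ Finset.range n, tr M (g (κ k))) :=
    fun n => hsns.smul _ (hsns.sum (fun k => tr M (g (κ k))) (fun k => mem_tr hK (hg _) M) n)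
  have hSG : ∀ᶠ n : ℕ in atTop,
      nrmTK B K ((n:ℝ)⁻¹ • ∑ k ∈ Finset.range n, g (κ k) - G M) ≤ ε / 3 := by
    filter_upwards [hGt.eventually_lt_const (show 0 < ε/6 by positivity)] with n hn
    have e1 := hsns.avg_le (fun k => g (κ k) - tr M (g (κ k))) (fun k => mem_sub_tr hK (hg _) M)
      (ε/6) (by positivity) (fun k => hM _) n
    have e2 := hsns.nadd (hsns.smul (n:ℝ)⁻¹ (hsns.sum (fun k => g (κ k) - tr M (g (κ k)))
      (fun k => mem_sub_tr hK (hg _) M) n)) (hsubm (hAm n) hGm)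
    have e3 : (n:ℝ)⁻¹ • ∑ k ∈ Finset.range n, (g (κ k) - tr M (g (κ k))) +
        ((n:ℝ)⁻¹ • ∑ k ∈ Finset.range n, tr M (g (κ k)) - G M) =
        (n:ℝ)⁻¹ • ∑ k ∈ Finset.range n, g (κ k) - G M := by
      rw [Finset.sum_sub_distrib, smul_sub]
      abel
    rw [e3] at e2
    linarith
  obtain ⟨T, hT, hTn, hTG⟩ := hsns.dual (G M) hGm
  have hTS : Tendsto (fun n : ℕ => T ((n:ℝ)⁻¹ • ∑ k ∈ Finset.range n, g (κ k))) atTop (𝓝 0) := by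
    have := ((hw T hT).comp hκ.tendsto_atTop).cesaro
    refine this.congr fun n => ?_
    rw [functional_avg hsns hT (fun k => g (κ k)) (fun k => hg _)]
    rfl
  have hnG : nrmTK B K (G M) ≤ ε / 3 := by
    have h5 : Tendsto (fun n : ℕ => nrmTK B K (G M) -
        T ((n:ℝ)⁻¹ • ∑ k ∈ Finset.range n, g (κ k))) atTop (𝓝 (nrmTK B K (G M))) := by
      simpa using hTS.const_sub (nrmTK B K (G M))
    refine le_of_tendsto h5 ?_
    filter_upwards [hSG] with n hn
    have e1 := hTn _ (hsubm (hSm n) hGm)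
    have e2 : T ((n:ℝ)⁻¹ • ∑ k ∈ Finset.range n, g (κ k) - G M) =
        T ((n:ℝ)⁻¹ • ∑ k ∈ Finset.range n, g (κ k)) - T (G M) := by
      have := hT.1 _ _ (hSm n) (hsns.smul (-1) hGm)
      rw [hT.2.1 _ _ hGm, neg_one_smul, ← sub_eq_add_neg] at this
      rw [this]; ring
    rw [e2, hTG] at e1
    have := neg_abs_le (T ((n:ℝ)⁻¹ • ∑ k ∈ Finset.range n, g (κ k)) - nrmTK B K (G M))
    linarith
  obtain ⟨N, hN⟩ := eventually_atTop.1 hSG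
  refine ⟨N, fun n hn => ?_⟩
  rw [Real.dist_eq, sub_zero, abs_of_nonneg (hsns.nonneg (hSm n))]
  have e1 := hsns.nadd (hsubm (hSm n) hGm) hGm
  rw [sub_add_cancel] at e1
  have := hN n hn
  linarith

theorem hasWBS [CompleteSpace X] (hX : B.SSP) (hWBS : WeakBanachSaks X)
    (hK : Measurable (Function.uncurry K))
    (h1 : memTK B K (fun _ => 1)) : HasWBS (memTK B K) (nrmTK B K) := by
  intro f hf hw
  have hsns := isSNS (B := B) hK
  have hac := hX.acNorm
  obtain ⟨C, hC⟩ := hsns.bounded f hf hw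
  obtain ⟨σ, hσ, g, h, hg, hh, e1, e2, e3, e4⟩ := ssp_strong hX hK h1 f hf C hC
  have hwf : WeaklyNullSeq (memTK B K) (nrmTK B K) (fun n => f (σ n)) :=
    fun T hT => (hw T hT).comp hσ.tendsto_atTop
  have hwh := h_weak hK (fun n => f (σ n)) g h (fun n => hf _) hg hh e1
    (uac_of_tr hac hK h1 g hg e4) e3 hwf
  have hwg : WeaklyNullSeq (memTK B K) (nrmTK B K) g := by
    intro T hT
    have h2 := (hwf T hT).sub (hwh T hT)
    rw [sub_zero] at h2
    refine h2.congr fun n => ?_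
    beta_reduce
    rw [e1, hT.1 _ _ (hg n) (hh n)]; ring
  obtain ⟨τ, hτ, hτ2⟩ := g_cesaro hac hK h1 g hg hwg e4
  choose x hx hxn using fun n => (hh n).rep
  obtain ⟨ρ, hρ, hρ2⟩ := hWBS (fun n => x (τ n)) (fun φ =>
    (h_rep_weak hK h1 h hh e3 hwh x hx φ).comp hτ.tendsto_atTop)
  refine ⟨fun n => σ (τ (ρ n)), hσ.comp (hτ.comp hρ), ?_⟩
  have hlim := (hτ2 ρ hρ).add hρ2
  rw [add_zero] at hlim
  have hmg : ∀ n : ℕ, memTK B K ((n:ℝ)⁻¹ • ∑ k ∈ Finset.range n, g (τ (ρ k))) :=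
    fun n => hsns.smul _ (hsns.sum (fun k => g (τ (ρ k))) (fun k => hg _) n)
  have hmh : ∀ n : ℕ, memTK B K ((n:ℝ)⁻¹ • ∑ k ∈ Finset.range n, h (τ (ρ k))) :=
    fun n => hsns.smul _ (hsns.sum (fun k => h (τ (ρ k))) (fun k => hh _) n)
  refine squeeze_zero (fun n => hsns.nonneg (hsns.smul _
    (hsns.sum (fun k => f (σ (τ (ρ k)))) (fun k => hf _) n))) (fun n => ?_) hlim
  have hsplit : (n:ℝ)⁻¹ • ∑ k ∈ Finset.range n, f (σ (τ (ρ k))) =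
      (n:ℝ)⁻¹ • ∑ k ∈ Finset.range n, g (τ (ρ k)) +
      (n:ℝ)⁻¹ • ∑ k ∈ Finset.range n, h (τ (ρ k)) := by
    simp only [e1, Finset.sum_add_distrib, smul_add]
  rw [hsplit]
  refine (hsns.nadd (hmg n) (hmh n)).trans ?_
  gcongr
  have h3 := Dom.sum hK (fun k => (hh (τ (ρ k))).1) (fun k => (hx (τ (ρ k))).dom) n
  have h4 := (h3.2.smul hK h3.1 (n:ℝ)⁻¹).nrm_le hK (hmh n).1
  rwa [abs_of_nonneg (by positivity : (0:ℝ) ≤ (n:ℝ)⁻¹)] at h4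

end Final
/-- if `X` is a rearrangement invariant space on `[0,1]` with the weak
Banach-Saks property such that `X` and `X*` have the subsequence splitting property, and
`K ≥ 0` is a measurable kernel with `T_K(χ_{[0,1]}) ∈ X`, then the optimal domain `[T_K,X]`
has both the subsequence splitting property and the weak Banach-Saks property. -/
theorem statement5
    {X : Type*} [NormedAddCommGroup X] [NormedSpace ℝ X] [CompleteSpace X]
    (B : BFS ℝ mu01 X) (hRI : B.RI)
    (hWBS : WeakBanachSaks X) (hX : B.SSP)
    (B' : BFS ℝ mu01 (X →L[ℝ] ℝ))
    (hB'rep : ∀ (φ : X →L[ℝ] ℝ) (x : X), φ x = ∫ s, B.J x s * B'.J φ s ∂mu01)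
    (hXdual : B'.SSP)
    (K : ℝ → ℝ → ℝ≥0∞) (hK : Measurable (Function.uncurry K))
    (hKone : memTK B K ((Set.Icc (0 : ℝ) 1).indicator fun _ => 1)) :
    HasSSP mu01 (memTK B K) (nrmTK B K) ∧ HasWBS (memTK B K) (nrmTK B K) := by

  have h1 := mem_one hK hKone
  exact ⟨hasSSP hX hK h1, hasWBS hX hWBS hK h1⟩

end Paper
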